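/- arXiv:2402.06765 — 2 statements merged into one kernel-verified Lean document; each statement's English description precedes it below -/
import Mathlib

section
/- Fix a prior μ0 ∈ ΔΘ. The set of equilibrium sender payoffs (over all equilibria (ψ, α, β)) equals the closed interval [ŵ(μ0), v̂(μ0)]. -/
open MeasureTheory


/-- The Borel σ-algebra on the space of probability measures (the σ-algebra generated by
evaluation maps, i.e. the subspace σ-algebra of the Giry σ-algebra; for metrizable spaces
this is the Borel σ-algebra of the weak* topology). -/
instance probMeasurableSpace {Ω : Type*} [MeasurableSpace Ω] :
    MeasurableSpace (ProbabilityMeasure Ω) :=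
  MeasurableSpace.comap (fun μ => (μ : Measure Ω)) inferInstance

/-- Sender's expected utility from action `a` at belief `μ`. -/
noncomputable def senderEU {A Θ : Type*} [MeasurableSpace Θ]
    (uS : A → Θ → ℝ) (μ : ProbabilityMeasure Θ) (a : A) : ℝ :=
  ∫ θ, uS a θ ∂(μ : Measure Θ)

/-- The receiver's best responses `A*_R(μ)` at belief `μ`. -/
def bestResponses {A Θ : Type*} [MeasurableSpace Θ]
    (uR : A → Θ → ℝ) (μ : ProbabilityMeasure Θ) : Set A :=
  {a | ∀ a' : A, ∫ θ, uR a' θ ∂(μ : Measure Θ) ≤ ∫ θ, uR a θ ∂(μ : Measure Θ)}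

/-- The sender's upper value function `v`. -/
noncomputable def vFun {A Θ : Type*} [MeasurableSpace Θ]
    (uS uR : A → Θ → ℝ) (μ : ProbabilityMeasure Θ) : ℝ :=
  sSup (senderEU uS μ '' bestResponses uR μ)

/-- The sender's lower value function `w`. -/
noncomputable def wFun {A Θ : Type*} [MeasurableSpace Θ]
    (uS uR : A → Θ → ℝ) (μ : ProbabilityMeasure Θ) : ℝ :=
  sInf (senderEU uS μ '' bestResponses uR μ)

/-- The set `I(μ0)` of information policies: distributions over posteriors with
barycenter equal to the prior `μ0`. -/
def infoPolicies {Θ : Type*} [MeasurableSpace Θ] (μ0 : ProbabilityMeasure Θ) :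
    Set (ProbabilityMeasure (ProbabilityMeasure Θ)) :=
  {p | ∀ B : Set Θ, MeasurableSet B →
    ∫ ν, ((ν : Measure Θ) B).toReal ∂(p : Measure (ProbabilityMeasure Θ))
      = ((μ0 : Measure Θ) B).toReal}

/-- `v̂(μ0)`: the sender's best equilibrium (Bayesian persuasion) value. -/
noncomputable def vHat {A Θ : Type*} [MeasurableSpace Θ]
    (uS uR : A → Θ → ℝ) (μ0 : ProbabilityMeasure Θ) : ℝ :=
  sSup ((fun p : ProbabilityMeasure (ProbabilityMeasure Θ) =>
    ∫ ν, vFun uS uR ν ∂(p : Measure (ProbabilityMeasure Θ))) '' infoPolicies μ0)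

/-- `ŵ(μ0)`: the sender's worst equilibrium value. -/
noncomputable def wHat {A Θ : Type*} [MeasurableSpace Θ]
    (uS uR : A → Θ → ℝ) (μ0 : ProbabilityMeasure Θ) : ℝ :=
  sSup ((fun p : ProbabilityMeasure (ProbabilityMeasure Θ) =>
    ∫ ν, wFun uS uR ν ∂(p : Measure (ProbabilityMeasure Θ))) '' infoPolicies μ0)

/-- The set of experiments `Ψ`: measurable maps from states to distributions over
messages. -/
def Experiment (Θ M : Type*) [MeasurableSpace Θ] [MeasurableSpace M] : Type _ :=
  {ψ : Θ → ProbabilityMeasure M // Measurable ψ}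

/-- The sender's expected payoff from experiment `ψ` when the receiver plays `α`. -/
noncomputable def senderPayoff {A Θ M : Type*}
    [MeasurableSpace A] [MeasurableSpace Θ] [MeasurableSpace M]
    (uS : A → Θ → ℝ) (μ0 : ProbabilityMeasure Θ)
    (ψ : Experiment Θ M) (α : M → Experiment Θ M → ProbabilityMeasure A) : ℝ :=
  ∫ θ, ∫ m, ∫ a, uS a θ ∂(α m ψ : Measure A) ∂(ψ.1 θ : Measure M) ∂(μ0 : Measure Θ)

/-- Perfect Bayesian equilibrium of the persuasion game: (0) the receiver's strategy and
belief map are measurable in the realized message; (1) the sender's experiment choice is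
optimal; (2) the receiver best responds to his beliefs after every experiment and
message; (3) the receiver's beliefs are obtained from Bayesian updating. -/
def IsEquilibrium {A Θ M : Type*}
    [MeasurableSpace A] [MeasurableSpace Θ] [MeasurableSpace M]
    (uS uR : A → Θ → ℝ) (μ0 : ProbabilityMeasure Θ)
    (ψ : Experiment Θ M)
    (α : M → Experiment Θ M → ProbabilityMeasure A)
    (β : M → Experiment Θ M → ProbabilityMeasure Θ) : Prop :=
  (∀ ψ' : Experiment Θ M, Measurable fun m : M => α m ψ') ∧
  (∀ ψ' : Experiment Θ M, Measurable fun m : M => β m ψ') ∧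
  (∀ ψ' : Experiment Θ M, senderPayoff uS μ0 ψ' α ≤ senderPayoff uS μ0 ψ α) ∧
  (∀ (ψ' : Experiment Θ M) (m : M),
    (α m ψ' : Measure A)
      {a : A | ∀ a' : A, ∫ θ, uR a' θ ∂(β m ψ' : Measure Θ) ≤
        ∫ θ, uR a θ ∂(β m ψ' : Measure Θ)} = 1) ∧
  (∀ (ψ' : Experiment Θ M) (Mhat : Set M) (Θhat : Set Θ),
    MeasurableSet Mhat → MeasurableSet Θhat →
    ∫ θ, ∫ m in Mhat, ((β m ψ' : Measure Θ) Θhat).toReal ∂(ψ'.1 θ : Measure M)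
        ∂(μ0 : Measure Θ)
      = ∫ θ in Θhat, ((ψ'.1 θ : Measure M) Mhat).toReal ∂(μ0 : Measure Θ))

/-!
The sender can guarantee herself `∫ w dp` for every information policy `p`: she runs an experiment
that recommends an optimal action at each posterior of `p`. Receiver behaviour that is optimal given
the message alone is then also optimal given the posterior, because the recommendation already
achieves the optimum. Conversely the payoff from any experiment is at most `∫ v` over the posteriors
it induces, and `v̂` is attained because the joint laws of states and obeyed recommendations form a
compact set. Every payoff in between is obtained on path by letting the receiver mix between the
sender-best and the sender-worst best response, while deviations are met with the sender-worst one.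
With finitely many states an information policy can be replaced by one with at most one posterior
per state: as long as the posteriors are linearly dependent, mass is moved along the relation, in
the direction that does not lower the sender's value, until a posterior drops out.
-/

open Filter Topology ProbabilityTheory

section CompactChoice

variable {X A : Type*} [MeasurableSpace X] [TopologicalSpace A]

lemma measurable_iSup_of_continuous [TopologicalSpace.SeparableSpace A] {F : X → A → ℝ}
    (hFm : ∀ a, Measurable fun x => F x a) (hFc : ∀ x, Continuous (F x)) :
    Measurable fun x => ⨆ a, F x a := by
  obtain ⟨S, hS, hS_dense⟩ := TopologicalSpace.exists_countable_dense A
  have := hS.to_subtype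
  simp_rw [← fun x => hS_dense.ciSup' (hFc x)]
  exact Measurable.iSup fun a => hFm a

variable [CompactSpace A]

lemma exists_sSup_superlevel_eq {F f : A → ℝ} (hF : Continuous F) (hf : Continuous f)
    (hne : ∃ a, 0 ≤ f a) : ∃ a, 0 ≤ f a ∧ sSup (F '' {a | 0 ≤ f a}) = F a :=
  (isClosed_le continuous_const hf).isCompact.exists_sSup_image_eq hne hF.continuousOn

lemma le_sSup_superlevel {F f : A → ℝ} (hF : Continuous F) {a : A} (ha : 0 ≤ f a) :
    F a ≤ sSup (F '' {a | 0 ≤ f a}) :=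
  le_csSup ((isCompact_range hF).bddAbove.mono (Set.image_subset_range _ _)) ⟨a, ha, rfl⟩

lemma exists_eq_ciSup_of_continuous [Nonempty A] {F : A → ℝ} (hF : Continuous F) :
    ∃ a, F a = ⨆ a', F a' :=
  (isCompact_range hF).sSup_mem (Set.range_nonempty F)

variable [TopologicalSpace.SeparableSpace A]

lemma measurableSet_exists_nonneg {F : X → A → ℝ} (hFm : ∀ a, Measurable fun x => F x a)
    (hFc : ∀ x, Continuous (F x)) : MeasurableSet {x | ∃ a, 0 ≤ F x a} := by
  rcases isEmpty_or_nonempty A with _ | _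
  · simp
  convert measurableSet_le (measurable_const (a := (0 : ℝ))) (measurable_iSup_of_continuous hFm hFc)
    using 3 with x
  refine ⟨fun ⟨a, ha⟩ => ha.trans (le_ciSup (isCompact_range (hFc x)).bddAbove a), fun h => ?_⟩
  obtain ⟨a, ha⟩ := exists_eq_ciSup_of_continuous (hFc x)
  exact ⟨a, h.trans ha.ge⟩

lemma measurable_sSup_superlevel {F f : X → A → ℝ}
    (hFm : ∀ a, Measurable fun x => F x a) (hFc : ∀ x, Continuous (F x))
    (hfm : ∀ a, Measurable fun x => f x a) (hfc : ∀ x, Continuous (f x))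
    (hne : ∀ x, ∃ a, 0 ≤ f x a) :
    Measurable fun x => sSup (F x '' {a | 0 ≤ f x a}) := by
  refine measurable_of_Ici fun c => ?_
  convert measurableSet_exists_nonneg (F := fun x a => min (f x a) (F x a - c))
    (fun a => (hfm a).min ((hFm a).sub_const c))
    (fun x => (hfc x).min ((hFc x).sub continuous_const)) using 1
  ext x
  simp only [Set.mem_preimage, Set.mem_Ici, Set.mem_ofPred_eq, le_min_iff, sub_nonneg]
  constructor
  · intro hle
    obtain ⟨a, ha, hFa⟩ := exists_sSup_superlevel_eq (hFc x) (hfc x) (hne x)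
    exact ⟨a, ha, hle.trans hFa.le⟩
  · rintro ⟨a, ha, hFa⟩
    exact hFa.trans (le_sSup_superlevel (hFc x) ha)

end CompactChoice

-- Pull the constraint back along a continuous surjection from the Cantor set and choose the
-- greatest admissible preimage for the order of the real line.
lemma exists_measurable_selection {X A : Type*} [MeasurableSpace X] [TopologicalSpace A]
    [CompactSpace A] [TopologicalSpace.MetrizableSpace A] [Nonempty A] [MeasurableSpace A]
    [BorelSpace A] {f : X → A → ℝ} (hfm : ∀ a, Measurable fun x => f x a)
    (hfc : ∀ x, Continuous (f x)) (hne : ∀ x, ∃ a, 0 ≤ f x a) :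
    ∃ s : X → A, Measurable s ∧ ∀ x, 0 ≤ f x (s x) := by
  let _ := TopologicalSpace.metrizableSpaceMetric A
  obtain ⟨q, hq, hq_surj⟩ := exists_nat_bool_continuous_surjective_of_compact A
  let ι : (ℕ → Bool) → ℝ := fun y => cantorSetHomeomorphNatToBool.symm y
  have hι : Continuous ι := by fun_prop
  have hι_emb : MeasurableEmbedding ι := (hι.isClosedEmbedding (Subtype.val_injective.comp
    cantorSetHomeomorphNatToBool.symm.injective)).measurableEmbedding
  have hfqc : ∀ x, Continuous fun y => f x (q y) := fun x => (hfc x).comp hq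
  have hfq_ne : ∀ x, ∃ y, 0 ≤ f x (q y) := fun x => hq_surj.exists.1 (hne x)
  choose y hy hy_greatest using fun x => exists_sSup_superlevel_eq hι (hfqc x) (hfq_ne x)
  refine ⟨fun x => q (y x), hq.measurable.comp (hι_emb.measurable_comp_iff.1 ?_), hy⟩
  simpa only [Function.comp_def, ← hy_greatest] using measurable_sSup_superlevel
    (F := fun _ => ι) (fun _ => measurable_const) (fun _ => hι) (fun _ => hfm _) hfqc hfq_ne

namespace Experiment

variable {X Y : Type*} [MeasurableSpace X] [MeasurableSpace Y]

/-- An experiment seen as a Markov kernel. Besides the sender's experiments, the type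
`Experiment X Y` also serves for the receiver's strategies and belief maps, which are measurable
families of probability measures as well. -/
def kernel (ψ : Experiment X Y) : Kernel X Y :=
  ⟨fun x => ψ.1 x, measurable_subtype_coe.comp ψ.2⟩

instance (ψ : Experiment X Y) : IsMarkovKernel ψ.kernel :=
  ⟨fun x => (ψ.1 x).2⟩

/-- A Markov kernel seen as an experiment, the inverse of `Experiment.kernel`. -/
def ofKernel (κ : Kernel X Y) [IsMarkovKernel κ] : Experiment X Y :=
  ⟨fun x => ⟨κ x, inferInstance⟩, κ.measurable.subtype_mk⟩

lemma kernel_ofKernel (κ : Kernel X Y) [IsMarkovKernel κ] : (ofKernel κ).kernel = κ := rfl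

/-- The family sending `x` to the point mass at `f x`. -/
noncomputable def deterministic (f : X → Y) (hf : Measurable f) : Experiment X Y :=
  ofKernel (Kernel.deterministic f hf)

lemma deterministic_apply {f : X → Y} (hf : Measurable f) (x : X) :
    (deterministic f hf).1 x = diracProba (f x) :=
  Subtype.ext (Kernel.deterministic_apply hf x)

end Experiment

section BoundedIntegrands

variable {X : Type*} [MeasurableSpace X] {μ : Measure X} {f : X → ℝ} {C : ℝ}

lemma integrable_of_abs_le [IsFiniteMeasure μ] (hf : Measurable f) (hC : ∀ x, |f x| ≤ C) :
    Integrable f μ :=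
  .of_bound hf.aestronglyMeasurable C (Eventually.of_forall hC)

lemma abs_integral_le_of_abs_le [IsProbabilityMeasure μ] (hC : ∀ x, |f x| ≤ C) :
    |∫ x, f x ∂μ| ≤ C := by
  simpa using norm_integral_le_of_norm_le_const (μ := μ) (f := f) (Eventually.of_forall hC)

end BoundedIntegrands

section Payoffs

variable {A Θ : Type*} [MeasurableSpace Θ]

/-- The receiver's value at a belief: the largest expected utility of an action. -/
noncomputable def maxEU (u : A → Θ → ℝ) (ν : ProbabilityMeasure Θ) : ℝ :=
  ⨆ a, senderEU u ν a

/-- The expected utility of a mixed action `m` at a belief `ν`. -/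
noncomputable def mixedEU [MeasurableSpace A] (u : A → Θ → ℝ) (ν : ProbabilityMeasure Θ)
    (m : ProbabilityMeasure A) : ℝ :=
  ∫ a, senderEU u ν a ∂(m : Measure A)

lemma senderEU_neg (u : A → Θ → ℝ) (ν : ProbabilityMeasure Θ) (a : A) :
    senderEU (-u) ν a = -senderEU u ν a :=
  integral_neg _

lemma vFun_eq_neg_wFun (uS uR : A → Θ → ℝ) (ν : ProbabilityMeasure Θ) :
    vFun uS uR ν = -wFun (-uS) uR ν := by
  rw [vFun, wFun, Real.sInf_def, neg_neg]
  congr 1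
  ext t
  simp [senderEU_neg]

lemma wFun_eq_neg_vFun (uS uR : A → Θ → ℝ) (ν : ProbabilityMeasure Θ) :
    wFun uS uR ν = -vFun (-uS) uR ν := by
  rw [vFun_eq_neg_wFun, neg_neg, neg_neg]

lemma abs_senderEU_le {u : A → Θ → ℝ} {C : ℝ} (hC : ∀ a θ, |u a θ| ≤ C)
    (ν : ProbabilityMeasure Θ) (a : A) : |senderEU u ν a| ≤ C :=
  abs_integral_le_of_abs_le (hC a)

lemma abs_mixedEU_le [MeasurableSpace A] {u : A → Θ → ℝ} {C : ℝ} (hC : ∀ a θ, |u a θ| ≤ C)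
    (ν : ProbabilityMeasure Θ) (m : ProbabilityMeasure A) : |mixedEU u ν m| ≤ C :=
  abs_integral_le_of_abs_le (abs_senderEU_le hC ν)

end Payoffs

lemma exists_abs_le_of_continuous {A Θ : Type*} [TopologicalSpace A] [CompactSpace A]
    [TopologicalSpace Θ] [CompactSpace Θ] {u : A → Θ → ℝ} (hu : Continuous (Function.uncurry u)) :
    ∃ C, ∀ a θ, |u a θ| ≤ C := by
  obtain ⟨C, hC⟩ := (isCompact_range hu.abs).bddAbove
  exact ⟨C, fun a θ => hC ⟨(a, θ), rfl⟩⟩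

section ContinuousPayoffs

variable {A Θ : Type*} [TopologicalSpace A] [TopologicalSpace Θ] [MeasurableSpace Θ]
  [OpensMeasurableSpace Θ] {u uS uR : A → Θ → ℝ}

lemma measurable_senderEU (hu : Continuous (Function.uncurry u)) (a : A) :
    Measurable fun ν : ProbabilityMeasure Θ => senderEU u ν a :=
  (StronglyMeasurable.integral_kernel (hu.uncurry_left a).stronglyMeasurable
    (κ := Experiment.kernel ⟨id, measurable_id⟩)).measurable

variable [CompactSpace A] [TopologicalSpace.MetrizableSpace A] [CompactSpace Θ]

lemma continuous_senderEU (hu : Continuous (Function.uncurry u)) (ν : ProbabilityMeasure Θ) :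
    Continuous (senderEU u ν) := by
  change Continuous fun a => ∫ θ, u a θ ∂(ν : Measure Θ)
  simpa only [setIntegral_univ] using
    continuous_parametric_integral_of_continuous (μ := (ν : Measure Θ)) hu isCompact_univ

lemma senderEU_le_maxEU (hu : Continuous (Function.uncurry u)) (ν : ProbabilityMeasure Θ) (a : A) :
    senderEU u ν a ≤ maxEU u ν :=
  le_ciSup (isCompact_range (continuous_senderEU hu ν)).bddAbove a

lemma measurable_maxEU (hu : Continuous (Function.uncurry u)) :
    Measurable fun ν : ProbabilityMeasure Θ => maxEU u ν :=
  measurable_iSup_of_continuous (measurable_senderEU hu) (continuous_senderEU hu)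

lemma senderEU_le_vFun (hS : Continuous (Function.uncurry uS)) {ν : ProbabilityMeasure Θ} {a : A}
    (ha : a ∈ bestResponses uR ν) : senderEU uS ν a ≤ vFun uS uR ν :=
  le_csSup ((isCompact_range (continuous_senderEU hS ν)).bddAbove.mono
    (Set.image_subset_range _ _)) ⟨a, ha, rfl⟩

lemma wFun_le_senderEU (hS : Continuous (Function.uncurry uS)) {ν : ProbabilityMeasure Θ} {a : A}
    (ha : a ∈ bestResponses uR ν) : wFun uS uR ν ≤ senderEU uS ν a := by
  have h := senderEU_le_vFun (uS := -uS) hS.neg ha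
  rw [senderEU_neg] at h
  rw [wFun_eq_neg_vFun]
  exact neg_le.1 h

variable [Nonempty A]

lemma exists_senderEU_eq_maxEU (hu : Continuous (Function.uncurry u)) (ν : ProbabilityMeasure Θ) :
    ∃ a, senderEU u ν a = maxEU u ν :=
  exists_eq_ciSup_of_continuous (continuous_senderEU hu ν)

lemma integrable_maxEU {X : Type*} [MeasurableSpace X] {p : Measure X} [IsFiniteMeasure p]
    {ν : X → ProbabilityMeasure Θ} (hu : Continuous (Function.uncurry u)) (hν : Measurable ν) :
    Integrable (fun x => maxEU u (ν x)) p := by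
  obtain ⟨C, hC⟩ := exists_abs_le_of_continuous hu
  refine integrable_of_abs_le (C := C) ((measurable_maxEU hu).comp hν) fun x => ?_
  obtain ⟨a, ha⟩ := exists_senderEU_eq_maxEU hu (ν x)
  exact ha ▸ abs_senderEU_le hC (ν x) a

lemma mem_bestResponses_iff (hu : Continuous (Function.uncurry u)) {ν : ProbabilityMeasure Θ}
    {a : A} : a ∈ bestResponses u ν ↔ senderEU u ν a = maxEU u ν :=
  ⟨fun h => (senderEU_le_maxEU hu ν a).antisymm (ciSup_le h),
    fun h a' => (senderEU_le_maxEU hu ν a').trans h.ge⟩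

lemma bestResponses_eq_superlevel (hu : Continuous (Function.uncurry u))
    (ν : ProbabilityMeasure Θ) :
    bestResponses u ν = {a | 0 ≤ senderEU u ν a - maxEU u ν} := by
  ext a
  rw [mem_bestResponses_iff hu, Set.mem_ofPred_eq, sub_nonneg]
  exact (senderEU_le_maxEU hu ν a).ge_iff_eq.symm

lemma exists_nonneg_senderEU_sub_maxEU (hu : Continuous (Function.uncurry u))
    (ν : ProbabilityMeasure Θ) : ∃ a, 0 ≤ senderEU u ν a - maxEU u ν :=
  (exists_senderEU_eq_maxEU hu ν).imp fun _ ha => (sub_eq_zero.2 ha).ge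

section

variable (hS : Continuous (Function.uncurry uS)) (hR : Continuous (Function.uncurry uR))
include hS hR

lemma exists_vFun_eq_senderEU (ν : ProbabilityMeasure Θ) :
    ∃ a ∈ bestResponses uR ν, vFun uS uR ν = senderEU uS ν a := by
  rw [vFun, bestResponses_eq_superlevel hR]
  exact exists_sSup_superlevel_eq (continuous_senderEU hS ν)
    ((continuous_senderEU hR ν).sub continuous_const) (exists_nonneg_senderEU_sub_maxEU hR ν)

lemma measurable_vFun : Measurable fun ν : ProbabilityMeasure Θ => vFun uS uR ν := by
  simp_rw [vFun, bestResponses_eq_superlevel hR]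
  exact measurable_sSup_superlevel (measurable_senderEU hS) (continuous_senderEU hS)
    (fun a => (measurable_senderEU hR a).sub (measurable_maxEU hR))
    (fun ν => (continuous_senderEU hR ν).sub continuous_const) (exists_nonneg_senderEU_sub_maxEU hR)

lemma measurable_wFun : Measurable fun ν : ProbabilityMeasure Θ => wFun uS uR ν := by
  simp_rw [wFun_eq_neg_vFun]
  exact (measurable_vFun (uS := -uS) hS.neg hR).neg

lemma abs_vFun_le {C : ℝ} (hC : ∀ a θ, |uS a θ| ≤ C) (ν : ProbabilityMeasure Θ) :
    |vFun uS uR ν| ≤ C := by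
  obtain ⟨a, -, ha⟩ := exists_vFun_eq_senderEU hS hR ν
  exact ha ▸ abs_senderEU_le hC ν a

lemma abs_wFun_le {C : ℝ} (hC : ∀ a θ, |uS a θ| ≤ C) (ν : ProbabilityMeasure Θ) :
    |wFun uS uR ν| ≤ C := by
  rw [wFun_eq_neg_vFun, abs_neg]
  exact abs_vFun_le (uS := -uS) hS.neg hR (by simpa using hC) ν

lemma integrable_vFun {X : Type*} [MeasurableSpace X] {p : Measure X} [IsFiniteMeasure p]
    {ν : X → ProbabilityMeasure Θ} (hν : Measurable ν) :
    Integrable (fun x => vFun uS uR (ν x)) p := by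
  obtain ⟨C, hC⟩ := exists_abs_le_of_continuous hS
  exact integrable_of_abs_le ((measurable_vFun hS hR).comp hν) fun x => abs_vFun_le hS hR hC _

lemma integrable_wFun {X : Type*} [MeasurableSpace X] {p : Measure X} [IsFiniteMeasure p]
    {ν : X → ProbabilityMeasure Θ} (hν : Measurable ν) :
    Integrable (fun x => wFun uS uR (ν x)) p := by
  obtain ⟨C, hC⟩ := exists_abs_le_of_continuous hS
  exact integrable_of_abs_le ((measurable_wFun hS hR).comp hν) fun x => abs_wFun_le hS hR hC _

variable [MeasurableSpace A] [BorelSpace A]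

lemma exists_measurable_senderEU_eq_vFun :
    ∃ s : ProbabilityMeasure Θ → A, Measurable s ∧
      ∀ ν, s ν ∈ bestResponses uR ν ∧ senderEU uS ν (s ν) = vFun uS uR ν := by
  obtain ⟨s, hs, hs_opt⟩ := exists_measurable_selection
    (f := fun ν a => min (senderEU uR ν a - maxEU uR ν) (senderEU uS ν a - vFun uS uR ν))
    (fun a => ((measurable_senderEU hR a).sub (measurable_maxEU hR)).min
      ((measurable_senderEU hS a).sub (measurable_vFun hS hR)))
    (fun ν => ((continuous_senderEU hR ν).sub continuous_const).min
      ((continuous_senderEU hS ν).sub continuous_const))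
    (fun ν => by
      obtain ⟨a, ha, hav⟩ := exists_vFun_eq_senderEU hS hR ν
      rw [bestResponses_eq_superlevel hR] at ha
      exact ⟨a, le_min ha (sub_nonneg.2 hav.le)⟩)
  refine ⟨s, hs, fun ν => ?_⟩
  have hsBR : s ν ∈ bestResponses uR ν := by
    rw [bestResponses_eq_superlevel hR]
    exact (le_min_iff.1 (hs_opt ν)).1
  exact ⟨hsBR, (senderEU_le_vFun hS hsBR).antisymm (sub_nonneg.1 (le_min_iff.1 (hs_opt ν)).2)⟩

lemma exists_measurable_senderEU_eq_wFun :
    ∃ s : ProbabilityMeasure Θ → A, Measurable s ∧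
      ∀ ν, s ν ∈ bestResponses uR ν ∧ senderEU uS ν (s ν) = wFun uS uR ν := by
  obtain ⟨s, hs, hsv⟩ := exists_measurable_senderEU_eq_vFun (uS := -uS) hS.neg hR
  refine ⟨s, hs, fun ν => ⟨(hsv ν).1, ?_⟩⟩
  rw [wFun_eq_neg_vFun, ← (hsv ν).2, senderEU_neg, neg_neg]

end

end ContinuousPayoffs

section MixedActions

variable {A Θ : Type*} [TopologicalSpace A] [CompactSpace A] [TopologicalSpace.MetrizableSpace A]
  [MeasurableSpace A] [BorelSpace A]
  [TopologicalSpace Θ] [CompactSpace Θ] [MeasurableSpace Θ] [OpensMeasurableSpace Θ]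
  {u uS uR : A → Θ → ℝ}

lemma integrable_senderEU (hu : Continuous (Function.uncurry u)) (ν : ProbabilityMeasure Θ)
    (m : ProbabilityMeasure A) : Integrable (senderEU u ν) (m : Measure A) := by
  obtain ⟨C, hC⟩ := exists_abs_le_of_continuous hu
  exact integrable_of_abs_le (continuous_senderEU hu ν).measurable (abs_senderEU_le hC ν)

lemma mixedEU_diracProba (hu : Continuous (Function.uncurry u)) (ν : ProbabilityMeasure Θ) (a : A) :
    mixedEU u ν (diracProba a) = senderEU u ν a :=
  integral_dirac' _ _ (continuous_senderEU hu ν).stronglyMeasurable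

lemma measurable_mixedEU (hu : Continuous (Function.uncurry u)) :
    Measurable fun z : ProbabilityMeasure Θ × ProbabilityMeasure A => mixedEU u z.1 z.2 := by
  have h_joint : Measurable fun p : A × ProbabilityMeasure Θ => senderEU u p.2 p.1 :=
    measurable_uncurry_of_continuous_of_measurable (u := fun a ν => senderEU u ν a)
      (continuous_senderEU hu) (measurable_senderEU hu)
  let κ : Experiment (ProbabilityMeasure Θ × ProbabilityMeasure A) A := ⟨Prod.snd, measurable_snd⟩
  exact (StronglyMeasurable.integral_kernel_prod_right' (κ := κ.kernel)
    (h_joint.comp (measurable_snd.prodMk (measurable_fst.comp measurable_fst))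
      ).stronglyMeasurable).measurable

lemma mixedEU_le_maxEU (hR : Continuous (Function.uncurry uR)) (ν : ProbabilityMeasure Θ)
    (m : ProbabilityMeasure A) : mixedEU uR ν m ≤ maxEU uR ν := by
  simpa [mixedEU] using integral_mono (integrable_senderEU hR ν m) (integrable_const (maxEU uR ν))
    (senderEU_le_maxEU hR ν)

variable [Nonempty A]

lemma measurableSet_bestResponses (hR : Continuous (Function.uncurry uR))
    (ν : ProbabilityMeasure Θ) : MeasurableSet (bestResponses uR ν) := by
  rw [bestResponses_eq_superlevel hR]
  exact measurableSet_le measurable_const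
    ((continuous_senderEU hR ν).measurable.sub measurable_const)

lemma measure_bestResponses_eq_one_iff (hR : Continuous (Function.uncurry uR))
    {ν : ProbabilityMeasure Θ} {m : ProbabilityMeasure A} :
    (m : Measure A) (bestResponses uR ν) = 1 ↔ mixedEU uR ν m = maxEU uR ν := by
  rw [← mem_ae_iff_prob_eq_one (measurableSet_bestResponses hR ν),
    show bestResponses uR ν = {a | senderEU uR ν a = maxEU uR ν} from
      Set.ext fun _ => mem_bestResponses_iff hR]
  have h := integral_eq_iff_of_ae_le (integrable_senderEU hR ν m)
    (integrable_const (maxEU uR ν)) (Eventually.of_forall (senderEU_le_maxEU hR ν))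
  rw [integral_const, probReal_univ, one_smul] at h
  exact h.symm

variable {ν : ProbabilityMeasure Θ} {m : ProbabilityMeasure A}

lemma mixedEU_le_vFun (hS : Continuous (Function.uncurry uS))
    (hR : Continuous (Function.uncurry uR)) (hm : mixedEU uR ν m = maxEU uR ν) :
    mixedEU uS ν m ≤ vFun uS uR ν := by
  have hBR := (mem_ae_iff_prob_eq_one (measurableSet_bestResponses hR ν)).2
    ((measure_bestResponses_eq_one_iff hR).2 hm)
  simpa [mixedEU] using
    integral_mono_ae (integrable_senderEU hS ν m) (integrable_const (vFun uS uR ν))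
    (mem_of_superset hBR fun a ha => senderEU_le_vFun hS ha)

lemma wFun_le_mixedEU (hS : Continuous (Function.uncurry uS))
    (hR : Continuous (Function.uncurry uR)) (hm : mixedEU uR ν m = maxEU uR ν) :
    wFun uS uR ν ≤ mixedEU uS ν m := by
  have hBR := (mem_ae_iff_prob_eq_one (measurableSet_bestResponses hR ν)).2
    ((measure_bestResponses_eq_one_iff hR).2 hm)
  simpa [mixedEU] using
    integral_mono_ae (integrable_const (wFun uS uR ν)) (integrable_senderEU hS ν m)
    (mem_of_superset hBR fun a ha => wFun_le_senderEU hS ha)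

end MixedActions

section SignalLaws

variable {A Θ M N : Type*} [MeasurableSpace Θ] [MeasurableSpace M] [MeasurableSpace N]

/-- The joint law of state and message under the experiment `ψ`. -/
noncomputable def jointLaw (μ0 : ProbabilityMeasure Θ) (ψ : Experiment Θ M) : Measure (Θ × M) :=
  (μ0 : Measure Θ) ⊗ₘ ψ.kernel

instance (μ0 : ProbabilityMeasure Θ) (ψ : Experiment Θ M) :
    IsProbabilityMeasure (jointLaw μ0 ψ) :=
  inferInstanceAs (IsProbabilityMeasure (_ ⊗ₘ _))

/-- The joint law of state and message when `x` is drawn from `p`, the state from `ν x`, and the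
message is `h x`. Thus `ν x` is the belief of an observer of `x`, of which the message may be a
coarsening. -/
noncomputable def signalLaw (p : Measure N) (ν : Experiment N Θ) (h : N → M) : Measure (Θ × M) :=
  (p ⊗ₘ ν.kernel).map fun z => (z.2, h z.1)

/-- The expected payoff `u` when state and message are drawn from `J` and the receiver plays `κ`. -/
noncomputable def expectedPayoff [MeasurableSpace A] (u : A → Θ → ℝ) (J : Measure (Θ × M))
    (κ : Experiment M A) : ℝ :=
  ∫ z, ∫ a, u a z.1 ∂(κ.1 z.2 : Measure A) ∂J

variable [TopologicalSpace A] [CompactSpace A] [TopologicalSpace.MetrizableSpace A]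
  [MeasurableSpace A] [BorelSpace A] [TopologicalSpace Θ] [OpensMeasurableSpace Θ]
  {u uR : A → Θ → ℝ}

lemma measurable_integral_strategy (hu : Continuous (Function.uncurry u)) (κ : Experiment M A) :
    Measurable fun z : Θ × M => ∫ a, u a z.1 ∂(κ.1 z.2 : Measure A) :=
  (StronglyMeasurable.integral_kernel_prod_right' (κ := κ.kernel.comap Prod.snd measurable_snd)
    (f := fun q : (Θ × M) × A => u q.2 q.1.1)
    (hu.measurable.comp (measurable_snd.prodMk measurable_fst.fst)).stronglyMeasurable).measurable

variable [CompactSpace Θ]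

lemma integrable_integral_strategy {J : Measure (Θ × M)} [IsFiniteMeasure J]
    (hu : Continuous (Function.uncurry u)) (κ : Experiment M A) :
    Integrable (fun z : Θ × M => ∫ a, u a z.1 ∂(κ.1 z.2 : Measure A)) J := by
  obtain ⟨C, hC⟩ := exists_abs_le_of_continuous hu
  exact integrable_of_abs_le (measurable_integral_strategy hu κ)
    fun z => abs_integral_le_of_abs_le fun a => hC a z.1

lemma senderPayoff_eq_expectedPayoff (hu : Continuous (Function.uncurry u))
    (μ0 : ProbabilityMeasure Θ) (ψ : Experiment Θ M)
    {α : M → Experiment Θ M → ProbabilityMeasure A} (hα : Measurable fun m => α m ψ) :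
    senderPayoff u μ0 ψ α = expectedPayoff u (jointLaw μ0 ψ) ⟨fun m => α m ψ, hα⟩ :=
  (Measure.integral_compProd (integrable_integral_strategy (J := jointLaw μ0 ψ) hu
    ⟨fun m => α m ψ, hα⟩)).symm

variable {p : Measure N} [IsProbabilityMeasure p] {ν : Experiment N Θ} {h : N → M}

lemma integrable_mixedEU (hu : Continuous (Function.uncurry u)) (κ : Experiment N A) :
    Integrable (fun x => mixedEU u (ν.1 x) (κ.1 x)) p := by
  obtain ⟨C, hC⟩ := exists_abs_le_of_continuous hu
  exact integrable_of_abs_le ((measurable_mixedEU hu).comp (ν.2.prodMk κ.2))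
    fun x => abs_mixedEU_le hC _ _

lemma expectedPayoff_signalLaw (hu : Continuous (Function.uncurry u)) (hh : Measurable h)
    (κ : Experiment M A) :
    expectedPayoff u (signalLaw p ν h) κ = ∫ x, mixedEU u (ν.1 x) (κ.1 (h x)) ∂p := by
  have hswap : Measurable fun z : N × Θ => (z.2, h z.1) :=
    measurable_snd.prodMk (hh.comp measurable_fst)
  have : IsProbabilityMeasure (signalLaw p ν h) :=
    Measure.isProbabilityMeasure_map hswap.aemeasurable
  have hint := integrable_integral_strategy (J := signalLaw p ν h) hu κ
  calc ∫ z, ∫ a, u a z.1 ∂(κ.1 z.2 : Measure A) ∂signalLaw p ν h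
      = ∫ z, ∫ a, u a z.2 ∂(κ.1 (h z.1) : Measure A) ∂(p ⊗ₘ ν.kernel) :=
        integral_map hswap.aemeasurable hint.aestronglyMeasurable
    _ = ∫ x, ∫ θ, ∫ a, u a θ ∂(κ.1 (h x) : Measure A) ∂(ν.1 x : Measure Θ) ∂p :=
        Measure.integral_compProd (hint.comp_measurable hswap)
    _ = ∫ x, mixedEU u (ν.1 x) (κ.1 (h x)) ∂p := by
        obtain ⟨C, hC⟩ := exists_abs_le_of_continuous hu
        exact integral_congr_ae (Eventually.of_forall fun x => integral_integral_swap
          (integrable_of_abs_le (hu.measurable.comp measurable_swap) fun z => hC z.2 z.1))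

variable [Nonempty A]

lemma expectedPayoff_le_integral_maxEU (hR : Continuous (Function.uncurry uR)) (hh : Measurable h)
    (κ : Experiment M A) :
    expectedPayoff uR (signalLaw p ν h) κ ≤ ∫ x, maxEU uR (ν.1 x) ∂p := by
  rw [expectedPayoff_signalLaw hR hh]
  exact integral_mono (integrable_mixedEU hR ⟨_, κ.2.comp hh⟩) (integrable_maxEU hR ν.2)
    fun x => mixedEU_le_maxEU hR _ _

lemma expectedPayoff_eq_integral_maxEU_iff (hR : Continuous (Function.uncurry uR))
    (hh : Measurable h) (κ : Experiment M A) :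
    expectedPayoff uR (signalLaw p ν h) κ = ∫ x, maxEU uR (ν.1 x) ∂p ↔
      ∀ᵐ x ∂p, mixedEU uR (ν.1 x) (κ.1 (h x)) = maxEU uR (ν.1 x) := by
  rw [expectedPayoff_signalLaw hR hh]
  exact integral_eq_iff_of_ae_le (integrable_mixedEU hR ⟨_, κ.2.comp hh⟩) (integrable_maxEU hR ν.2)
    (Eventually.of_forall fun x => mixedEU_le_maxEU hR _ _)

-- Both representations give the receiver the same payoff from every strategy, and each of `κ` and
-- `κ'` attains the upper bound in its own representation, so the two bounds agree.
lemma ae_optimal_of_signalLaw_eq {N' : Type*} [MeasurableSpace N'] {p' : Measure N'}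
    [IsProbabilityMeasure p'] {ν' : Experiment N' Θ} {h' : N' → M}
    (hR : Continuous (Function.uncurry uR)) (hh : Measurable h) (hh' : Measurable h')
    (h_law : signalLaw p ν h = signalLaw p' ν' h') {κ κ' : Experiment M A}
    (hκ : ∀ᵐ x ∂p, mixedEU uR (ν.1 x) (κ.1 (h x)) = maxEU uR (ν.1 x))
    (hκ' : ∀ᵐ x ∂p', mixedEU uR (ν'.1 x) (κ'.1 (h' x)) = maxEU uR (ν'.1 x)) :
    ∀ᵐ x ∂p, mixedEU uR (ν.1 x) (κ'.1 (h x)) = maxEU uR (ν.1 x) := by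
  rw [← expectedPayoff_eq_integral_maxEU_iff hR hh] at hκ ⊢
  rw [← expectedPayoff_eq_integral_maxEU_iff hR hh'] at hκ'
  refine (expectedPayoff_le_integral_maxEU hR hh κ').antisymm ?_
  rw [← hκ, h_law, hκ']
  exact expectedPayoff_le_integral_maxEU hR hh' κ

end SignalLaws

section Posteriors

variable {Θ M N : Type*} [MeasurableSpace Θ] [MeasurableSpace M] [MeasurableSpace N]

/-- Bayesian updating: `b` is a version of the conditional law of the state given the message when
`J` is the joint law of state and message. -/
def IsPosterior (J : Measure (Θ × M)) (b : Experiment M Θ) : Prop :=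
  J = signalLaw J.snd b id

lemma setIntegral_toReal_kernel {μ : Measure M} [SFinite μ] {κ : Kernel M Θ} [IsFiniteKernel κ]
    {s : Set M} {t : Set Θ} (hs : MeasurableSet s) (ht : MeasurableSet t) :
    ∫ x in s, (κ x t).toReal ∂μ = ((μ ⊗ₘ κ) (s ×ˢ t)).toReal := by
  rw [Measure.compProd_apply_prod hs ht, integral_toReal (κ.measurable_coe ht).aemeasurable
    (Eventually.of_forall fun x => measure_lt_top _ _)]

lemma signalLaw_id_apply_prod {p : Measure M} {b : Experiment M Θ} {s : Set M}
    {t : Set Θ} (hs : MeasurableSet s) (ht : MeasurableSet t) :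
    signalLaw p b id (t ×ˢ s) = (p ⊗ₘ b.kernel) (s ×ˢ t) := by
  change (p ⊗ₘ b.kernel).map Prod.swap (t ×ˢ s) = _
  rw [Measure.map_apply measurable_swap (ht.prod hs), Set.preimage_swap_prod]

lemma integral_setIntegral_belief (μ0 : ProbabilityMeasure Θ) (ψ : Experiment Θ M)
    (b : Experiment M Θ) {s : Set M} {t : Set Θ} (hs : MeasurableSet s) (ht : MeasurableSet t) :
    ∫ θ, ∫ m in s, ((b.1 m : Measure Θ) t).toReal ∂(ψ.1 θ : Measure M) ∂(μ0 : Measure Θ) =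
      (signalLaw (jointLaw μ0 ψ).snd b id (t ×ˢ s)).toReal := by
  have hbt : Measurable fun m => ((b.1 m : Measure Θ) t).toReal :=
    (b.kernel.measurable_coe ht).ennreal_toReal
  have hint : IntegrableOn (fun z : Θ × M => ((b.1 z.2 : Measure Θ) t).toReal) (Set.univ ×ˢ s)
      (jointLaw μ0 ψ) :=
    (integrable_of_abs_le (C := 1) (hbt.comp measurable_snd) fun z =>
      (abs_of_nonneg ENNReal.toReal_nonneg).trans_le measureReal_le_one).integrableOn
  calc _ = ∫ z in Set.univ ×ˢ s, ((b.1 z.2 : Measure Θ) t).toReal ∂jointLaw μ0 ψ := by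
        rw [jointLaw, Measure.setIntegral_compProd .univ hs hint, setIntegral_univ]
        rfl
    _ = ∫ m in s, ((b.1 m : Measure Θ) t).toReal ∂(jointLaw μ0 ψ).snd := by
        rw [Measure.snd, setIntegral_map hs hbt.aestronglyMeasurable measurable_snd.aemeasurable,
          Set.univ_prod]
    _ = _ := by
        rw [signalLaw_id_apply_prod hs ht]
        exact setIntegral_toReal_kernel (κ := b.kernel) hs ht

lemma isPosterior_jointLaw_iff (μ0 : ProbabilityMeasure Θ) (ψ : Experiment Θ M)
    (b : Experiment M Θ) :
    IsPosterior (jointLaw μ0 ψ) b ↔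
      ∀ (s : Set M) (t : Set Θ), MeasurableSet s → MeasurableSet t →
        ∫ θ, ∫ m in s, ((b.1 m : Measure Θ) t).toReal ∂(ψ.1 θ : Measure M) ∂(μ0 : Measure Θ) =
          ∫ θ in t, ((ψ.1 θ : Measure M) s).toReal ∂(μ0 : Measure Θ) := by
  have : IsProbabilityMeasure (signalLaw (jointLaw μ0 ψ).snd b id) :=
    Measure.isProbabilityMeasure_map measurable_swap.aemeasurable
  have h_iff {s : Set M} {t : Set Θ} (hs : MeasurableSet s) (ht : MeasurableSet t) :
      jointLaw μ0 ψ (t ×ˢ s) = signalLaw (jointLaw μ0 ψ).snd b id (t ×ˢ s) ↔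
        ∫ θ, ∫ m in s, ((b.1 m : Measure Θ) t).toReal ∂(ψ.1 θ : Measure M) ∂(μ0 : Measure Θ) =
          ∫ θ in t, ((ψ.1 θ : Measure M) s).toReal ∂(μ0 : Measure Θ) := by
    have h_right : ∫ θ in t, ((ψ.1 θ : Measure M) s).toReal ∂(μ0 : Measure Θ) =
        (jointLaw μ0 ψ (t ×ˢ s)).toReal := setIntegral_toReal_kernel (κ := ψ.kernel) ht hs
    rw [integral_setIntegral_belief μ0 ψ b hs ht, h_right, eq_comm,
      ENNReal.toReal_eq_toReal_iff' (measure_ne_top _ _) (measure_ne_top _ _)]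
  rw [IsPosterior, Measure.ext_prod_iff]
  exact ⟨fun h s t hs ht => (h_iff hs ht).1 (h ht hs),
    fun h t s ht hs => (h_iff hs ht).2 (h s t hs ht)⟩

lemma exists_isPosterior [StandardBorelSpace Θ] [Nonempty Θ] (J : Measure (Θ × M))
    [IsFiniteMeasure J] : ∃ b : Experiment M Θ, IsPosterior J b := by
  refine ⟨.ofKernel (J.map Prod.swap).condKernel, ?_⟩
  change J = (J.snd ⊗ₘ (J.map Prod.swap).condKernel).map Prod.swap
  rw [← Measure.fst_map_swap, Measure.disintegrate,
    Measure.map_map measurable_swap measurable_swap, Prod.swap_swap_eq, Measure.map_id]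

lemma fst_jointLaw (μ0 : ProbabilityMeasure Θ) (ψ : Experiment Θ M) :
    (jointLaw μ0 ψ).fst = μ0 :=
  Measure.fst_compProd _ _

lemma fst_signalLaw {p : Measure N} [SFinite p] {ν : Experiment N Θ} {h : N → M}
    (hh : Measurable h) : (signalLaw p ν h).fst = ν.kernel ∘ₘ p := by
  have hswap : Measurable fun z : N × Θ => (z.2, h z.1) :=
    measurable_snd.prodMk (hh.comp measurable_fst)
  rw [signalLaw, Measure.fst, Measure.map_map measurable_fst hswap]
  exact Measure.snd_compProd p ν.kernel

lemma comp_kernel_real_apply {p : Measure N} {ν : Experiment N Θ} {B : Set Θ}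
    (hB : MeasurableSet B) :
    (ν.kernel ∘ₘ p).real B = ∫ x, (ν.1 x : Measure Θ).real B ∂p := by
  rw [Measure.real, Measure.bind_apply hB ν.kernel.aemeasurable]
  exact (integral_toReal (ν.kernel.measurable_coe hB).aemeasurable
    (Eventually.of_forall fun x => measure_lt_top (ν.1 x : Measure Θ) B)).symm

lemma map_mem_infoPolicies_iff {μ0 : ProbabilityMeasure Θ} {p : ProbabilityMeasure N}
    {ν : Experiment N Θ} :
    p.map ν.2.aemeasurable ∈ infoPolicies μ0 ↔ ν.kernel ∘ₘ (p : Measure N) = μ0 := by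
  rw [Measure.ext_iff]
  refine forall₂_congr fun B hB => ?_
  have h_eval : Measurable fun ν' : ProbabilityMeasure Θ => ((ν' : Measure Θ) B).toReal :=
    ((Measure.measurable_coe hB).comp measurable_subtype_coe).ennreal_toReal
  rw [ProbabilityMeasure.toMeasure_map, integral_map ν.2.aemeasurable h_eval.aestronglyMeasurable,
    ← ENNReal.toReal_eq_toReal_iff' (measure_ne_top _ _) (measure_ne_top _ _)]
  exact Eq.congr_left (comp_kernel_real_apply hB).symm

lemma mem_infoPolicies_iff {μ0 : ProbabilityMeasure Θ}
    {p : ProbabilityMeasure (ProbabilityMeasure Θ)} :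
    p ∈ infoPolicies μ0 ↔
      Experiment.kernel ⟨id, measurable_id⟩ ∘ₘ (p : Measure (ProbabilityMeasure Θ)) = μ0 := by
  have h_map : p.map aemeasurable_id = p := Subtype.ext Measure.map_id
  nth_rw 1 [← h_map]
  exact map_mem_infoPolicies_iff (ν := ⟨id, measurable_id⟩)

lemma diracProba_mem_infoPolicies (μ0 : ProbabilityMeasure Θ) :
    diracProba μ0 ∈ infoPolicies μ0 :=
  fun _ hB => integral_dirac' _ _
    ((Measure.measurable_coe hB).comp measurable_subtype_coe).ennreal_toReal.stronglyMeasurable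

lemma exists_jointLaw_eq_signalLaw [StandardBorelSpace N] [Nonempty N] {X : Type*}
    [MeasurableSpace X] {μ0 : ProbabilityMeasure Θ} {p : Measure X} [IsProbabilityMeasure p]
    {ν : Experiment X Θ} (h_mean : ν.kernel ∘ₘ p = μ0) {s : X → N} (hs : Measurable s) {e : N → M}
    (he : Measurable e) : ∃ ψ : Experiment Θ M, jointLaw μ0 ψ = signalLaw p ν (e ∘ s) := by
  have hswap : Measurable fun z : X × Θ => (z.2, s z.1) :=
    measurable_snd.prodMk (hs.comp measurable_fst)
  have : IsProbabilityMeasure (signalLaw p ν s) :=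
    Measure.isProbabilityMeasure_map hswap.aemeasurable
  have := Kernel.IsMarkovKernel.map (signalLaw p ν s).condKernel he
  refine ⟨.ofKernel ((signalLaw p ν s).condKernel.map e), ?_⟩
  rw [jointLaw, Experiment.kernel_ofKernel, ← h_mean, ← fst_signalLaw hs, Measure.compProd_map he,
    Measure.disintegrate, signalLaw, Measure.map_map (measurable_id.prodMap he) hswap]
  rfl

end Posteriors

section BestResponding

variable {A Θ M N : Type*} [MeasurableSpace M] [MeasurableSpace N]
  [TopologicalSpace A] [CompactSpace A] [TopologicalSpace.MetrizableSpace A]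
  [MeasurableSpace A] [BorelSpace A]
  [TopologicalSpace Θ] [CompactSpace Θ] [MeasurableSpace Θ] [OpensMeasurableSpace Θ]
  {u uS uR : A → Θ → ℝ}

/-- The strategy `κ` best responds to the belief map `b` after every message. -/
def BestResponds (uR : A → Θ → ℝ) (b : Experiment M Θ) (κ : Experiment M A) : Prop :=
  ∀ m, mixedEU uR (b.1 m) (κ.1 m) = maxEU uR (b.1 m)

lemma IsPosterior.expectedPayoff_eq {J : Measure (Θ × M)} [IsProbabilityMeasure J]
    {b : Experiment M Θ} (hb : IsPosterior J b) (hu : Continuous (Function.uncurry u))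
    (κ : Experiment M A) : expectedPayoff u J κ = ∫ m, mixedEU u (b.1 m) (κ.1 m) ∂J.snd := by
  nth_rw 1 [hb]
  exact expectedPayoff_signalLaw hu measurable_id κ

variable [Nonempty A]

lemma mixedEU_deterministic_eq_maxEU_iff {g : M → A} (hg : Measurable g)
    (hR : Continuous (Function.uncurry uR)) {μ : ProbabilityMeasure Θ} {m : M} :
    mixedEU uR μ ((Experiment.deterministic g hg).1 m) = maxEU uR μ ↔ g m ∈ bestResponses uR μ := by
  rw [Experiment.deterministic_apply, mixedEU_diracProba hR, mem_bestResponses_iff hR]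

variable {p : Measure N} [IsProbabilityMeasure p] {ν : Experiment N Θ} {h : N → M}
  {b : Experiment M Θ} {J : Measure (Θ × M)} [IsProbabilityMeasure J] {g : M → A}

section

variable (hS : Continuous (Function.uncurry uS)) (hR : Continuous (Function.uncurry uR))
include hS hR

-- Best responding to the message remains optimal against the finer information `ν x`, because the
-- recommendation `g` shows that the message is a sufficient signal for the receiver.
lemma integral_wFun_le_expectedPayoff (hh : Measurable h) (hJ : J = signalLaw p ν h)
    (hb : IsPosterior J b) (hg : Measurable g)
    (h_opt : ∀ x, g (h x) ∈ bestResponses uR (ν.1 x)) {κ : Experiment M A}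
    (hκ : BestResponds uR b κ) : ∫ x, wFun uS uR (ν.1 x) ∂p ≤ expectedPayoff uS J κ := by
  have h_ae := ae_optimal_of_signalLaw_eq hR hh measurable_id (hJ.symm.trans hb)
    (Eventually.of_forall fun x => (mixedEU_deterministic_eq_maxEU_iff hg hR).2 (h_opt x))
    (Eventually.of_forall hκ)
  rw [hJ, expectedPayoff_signalLaw hS hh]
  exact integral_mono_ae (integrable_wFun hS hR ν.2) (integrable_mixedEU hS ⟨_, κ.2.comp hh⟩)
    (h_ae.mono fun x hx => wFun_le_mixedEU hS hR hx)

lemma integral_senderEU_le_integral_vFun (hh : Measurable h) (hJ : J = signalLaw p ν h)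
    (hb : IsPosterior J b) (hg : Measurable g)
    (h_opt : ∀ x, g (h x) ∈ bestResponses uR (ν.1 x)) :
    ∫ x, senderEU uS (ν.1 x) (g (h x)) ∂p ≤ ∫ m, vFun uS uR (b.1 m) ∂J.snd := by
  obtain ⟨s, hs, hs_opt⟩ := exists_measurable_senderEU_eq_vFun hS hR
  have h_ae := ae_optimal_of_signalLaw_eq hR measurable_id hh (hb.symm.trans hJ)
    (Eventually.of_forall fun m =>
      (mixedEU_deterministic_eq_maxEU_iff (hs.comp b.2) hR).2 (hs_opt (b.1 m)).1)
    (Eventually.of_forall fun x => (mixedEU_deterministic_eq_maxEU_iff hg hR).2 (h_opt x))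
  calc ∫ x, senderEU uS (ν.1 x) (g (h x)) ∂p
      = expectedPayoff uS J (.deterministic g hg) := by
        rw [hJ, expectedPayoff_signalLaw hS hh]
        simp only [Experiment.deterministic_apply, mixedEU_diracProba hS]
    _ = ∫ m, mixedEU uS (b.1 m) ((Experiment.deterministic g hg).1 m) ∂J.snd :=
        hb.expectedPayoff_eq hS _
    _ ≤ ∫ m, vFun uS uR (b.1 m) ∂J.snd :=
        integral_mono_ae (integrable_mixedEU hS _) (integrable_vFun hS hR b.2)
          (h_ae.mono fun m hm => mixedEU_le_vFun hS hR hm)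

end

end BestResponding

lemma max_zero_mul_le_min_zero_add {y d C : ℝ} (hd : |d| ≤ C) :
    max y 0 * d ≤ min d 0 + C * |(if d < 0 then 1 else 0) - y| := by
  have hd' := abs_le.1 hd
  split_ifs with h
  · rw [min_eq_left h.le]
    rw [abs_of_neg h] at hd
    have h_gap : 1 - max y 0 ≤ |1 - y| := by
      linarith [le_max_left y 0, le_abs_self (1 - y)]
    calc max y 0 * d = d + (1 - max y 0) * -d := by ring
      _ ≤ d + C * |1 - y| := by
        gcongr d + ?_
        rw [mul_comm C]
        exact mul_le_mul h_gap hd (neg_nonneg.2 h.le) (abs_nonneg _)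
  · rw [min_eq_right (not_lt.1 h), zero_sub, abs_neg, zero_add, mul_comm]
    gcongr
    exacts [(abs_nonneg d).trans hd, hd'.2, max_le (le_abs_self y) (abs_nonneg y)]

-- Approximate the indicator of `{D < 0}` in `L¹` by nonnegative continuous functions.
lemma ae_nonneg_of_forall_integral_mul_nonneg {X : Type*} [TopologicalSpace X] [NormalSpace X]
    [MeasurableSpace X] [BorelSpace X] {τ : Measure X} [IsFiniteMeasure τ] [τ.WeaklyRegular]
    {D : X → ℝ} (hD : Measurable D) {C : ℝ} (hC : ∀ x, |D x| ≤ C)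
    (h_test : ∀ g : C(X, ℝ), 0 ≤ g → 0 ≤ ∫ x, g x * D x ∂τ) : ∀ᵐ x ∂τ, 0 ≤ D x := by
  have hD_int : Integrable D τ := integrable_of_abs_le hD hC
  have h_min : Integrable (fun x => min (D x) 0) τ := hD_int.inf (integrable_zero _ _ _)
  have h_ind : Integrable (fun x => if D x < 0 then (1 : ℝ) else 0) τ :=
    integrable_of_abs_le (C := 1) (.ite (measurableSet_lt hD measurable_const) (by fun_prop)
      (by fun_prop)) fun x => by split_ifs <;> simp
  have h_approx (ε : ℝ) (hε : 0 < ε) : 0 ≤ (∫ x, min (D x) 0 ∂τ) + |C| * ε := by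
    obtain ⟨f, hfε, hf⟩ := h_ind.exists_boundedContinuous_integral_sub_le hε
    have h_dist : Integrable (fun x => |C| * ‖(if D x < 0 then (1 : ℝ) else 0) - f x‖) τ :=
      (h_ind.sub hf).norm.const_mul _
    calc 0 ≤ ∫ x, max (f x) 0 * D x ∂τ :=
          h_test ⟨fun x => max (f x) 0, by fun_prop⟩ fun x => le_max_right _ _
      _ ≤ ∫ x, min (D x) 0 + |C| * ‖(if D x < 0 then (1 : ℝ) else 0) - f x‖ ∂τ := by
          refine integral_mono (.bdd_mul hD_int (c := ‖f‖) (by fun_prop)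
            (Eventually.of_forall fun x => ?_)) (h_min.add h_dist) fun x =>
              max_zero_mul_le_min_zero_add ((hC x).trans (le_abs_self C))
          rw [Real.norm_eq_abs, abs_of_nonneg (le_max_right _ _)]
          exact max_le ((le_abs_self _).trans (f.norm_coe_le_norm x)) (norm_nonneg f)
      _ ≤ (∫ x, min (D x) 0 ∂τ) + |C| * ε := by
          rw [integral_add h_min h_dist, integral_const_mul]
          gcongr
  have h_lim : Tendsto (fun ε => (∫ x, min (D x) 0 ∂τ) + |C| * ε) (𝓝[>] 0)
      (𝓝 ((∫ x, min (D x) 0 ∂τ) + |C| * 0)) :=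
    (Continuous.tendsto (by fun_prop) 0).mono_left nhdsWithin_le_nhds
  have h_nonneg : 0 ≤ ∫ x, min (D x) 0 ∂τ := by
    simpa only [mul_zero, add_zero] using
      ge_of_tendsto h_lim (eventually_mem_nhdsWithin.mono h_approx)
  have h_eq := (integral_eq_zero_iff_of_nonneg (fun x => neg_nonneg.2 (min_le_right (D x) 0))
    h_min.neg).1 (by
      rw [integral_neg]
      exact neg_eq_zero.2 ((integral_nonpos fun x => min_le_right _ _).antisymm h_nonneg))
  filter_upwards [h_eq] with x hx using min_eq_right_iff.1 (neg_eq_zero.1 hx)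

section Obedience

variable {A Θ N : Type*} [TopologicalSpace A] [TopologicalSpace Θ] {u uR : A → Θ → ℝ}

lemma continuous_weighted_gain (hR : Continuous (Function.uncurry uR)) (g : C(A, ℝ)) (a' : A) :
    Continuous (Function.uncurry fun a θ => g a * (uR a θ - uR a' θ)) :=
  (g.continuous.comp continuous_fst).mul (hR.sub ((hR.uncurry_left a').comp continuous_snd))

variable [CompactSpace A] [CompactSpace Θ] [MeasurableSpace Θ]

lemma senderEU_weighted_gain [OpensMeasurableSpace Θ] (hR : Continuous (Function.uncurry uR))
    (g : A → ℝ) (a' : A) (ν : ProbabilityMeasure Θ) (a : A) :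
    senderEU (fun a θ => g a * (uR a θ - uR a' θ)) ν a =
      g a * (senderEU uR ν a - senderEU uR ν a') := by
  obtain ⟨C, hC⟩ := exists_abs_le_of_continuous hR
  have h_int (a : A) : Integrable (uR a) (ν : Measure Θ) :=
    integrable_of_abs_le (hR.uncurry_left a).measurable (hC a)
  exact (integral_const_mul _ _).trans (congrArg (g a * ·) (integral_sub (h_int a) (h_int a')))

variable [TopologicalSpace.MetrizableSpace A] [MeasurableSpace A] [BorelSpace A] [MeasurableSpace N]

/-- Laws of state and recommended action, with state marginal `μ0`, under which it is optimal for
the receiver to follow the recommendation. The obedience constraints are tested against nonnegative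
continuous weights instead of events, which makes them closed conditions in the weak topology. -/
def obedientLaws (uR : A → Θ → ℝ) (μ0 : ProbabilityMeasure Θ) : Set (ProbabilityMeasure (Θ × A)) :=
  {π | (π : Measure (Θ × A)).fst = μ0 ∧ ∀ g : C(A, ℝ), 0 ≤ g → ∀ a',
    0 ≤ ∫ z, g z.2 * (uR z.2 z.1 - uR a' z.1) ∂(π : Measure (Θ × A))}

lemma integral_signalLaw [OpensMeasurableSpace Θ] {p : Measure N} [IsProbabilityMeasure p]
    {ν : Experiment N Θ} {h : N → A}
    (hu : Continuous (Function.uncurry u)) (hh : Measurable h) :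
    ∫ z, u z.2 z.1 ∂signalLaw p ν h = ∫ x, senderEU u (ν.1 x) (h x) ∂p := by
  have h_payoff := expectedPayoff_signalLaw (p := p) (ν := ν) hu hh
    (.deterministic id measurable_id)
  simp only [expectedPayoff, Experiment.deterministic_apply, mixedEU_diracProba hu, id] at h_payoff
  rw [← h_payoff]
  refine integral_congr_ae (Eventually.of_forall fun z => ?_)
  exact (integral_dirac' _ _ (hu.uncurry_right z.1).stronglyMeasurable).symm

lemma signalLaw_mem_obedientLaws [OpensMeasurableSpace Θ]
    (hR : Continuous (Function.uncurry uR)) {μ0 : ProbabilityMeasure Θ} {p : Measure N}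
    [IsProbabilityMeasure p] {ν : Experiment N Θ} (h_mean : ν.kernel ∘ₘ p = μ0)
    {h : N → A} (hh : Measurable h) (h_opt : ∀ x, h x ∈ bestResponses uR (ν.1 x))
    {π : ProbabilityMeasure (Θ × A)} (hπ : (π : Measure (Θ × A)) = signalLaw p ν h) :
    π ∈ obedientLaws uR μ0 := by
  refine ⟨by rw [hπ, fst_signalLaw hh, h_mean], fun g hg a' => ?_⟩
  rw [hπ, integral_signalLaw (continuous_weighted_gain hR g a') hh]
  refine integral_nonneg fun x => ?_
  rw [senderEU_weighted_gain hR]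
  exact mul_nonneg (hg _) (sub_nonneg.2 (h_opt x a'))

lemma ae_mem_bestResponses_of_mem_obedientLaws [OpensMeasurableSpace Θ] [Nonempty A]
    (hR : Continuous (Function.uncurry uR))
    {μ0 : ProbabilityMeasure Θ} {π : ProbabilityMeasure (Θ × A)} (hπ : π ∈ obedientLaws uR μ0)
    {b : Experiment A Θ} (hb : IsPosterior (π : Measure (Θ × A)) b) :
    ∀ᵐ a ∂(π : Measure (Θ × A)).snd, a ∈ bestResponses uR (b.1 a) := by
  obtain ⟨C, hC⟩ := exists_abs_le_of_continuous hR
  have h_joint : Measurable fun z : A × ProbabilityMeasure Θ => senderEU uR z.2 z.1 :=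
    measurable_uncurry_of_continuous_of_measurable (u := fun a ν => senderEU uR ν a)
      (continuous_senderEU hR) (measurable_senderEU hR)
  have h_gain (a' : A) : ∀ᵐ a ∂(π : Measure (Θ × A)).snd,
      0 ≤ senderEU uR (b.1 a) a - senderEU uR (b.1 a) a' := by
    refine ae_nonneg_of_forall_integral_mul_nonneg (C := C + C)
      ((h_joint.comp (measurable_id.prodMk b.2)).sub ((measurable_senderEU hR a').comp b.2))
      (fun a => (abs_sub _ _).trans (add_le_add (abs_senderEU_le hC _ _) (abs_senderEU_le hC _ _)))
      fun g hg => ?_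
    have h_test := hπ.2 g hg a'
    rw [hb, integral_signalLaw (continuous_weighted_gain hR g a') measurable_id] at h_test
    simpa only [senderEU_weighted_gain hR, id] using h_test
  have h_dense := ae_all_iff.2 fun n => h_gain (TopologicalSpace.denseSeq A n)
  filter_upwards [h_dense] with a ha a'
  exact (TopologicalSpace.denseRange_denseSeq A).induction_on (p := fun a' =>
    senderEU uR (b.1 a) a' ≤ senderEU uR (b.1 a) a) a'
    (isClosed_le (continuous_senderEU hR _) continuous_const) (fun n => sub_nonneg.1 (ha n))

variable [TopologicalSpace.MetrizableSpace Θ] [BorelSpace Θ]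

lemma isClosed_obedientLaws (hR : Continuous (Function.uncurry uR)) (μ0 : ProbabilityMeasure Θ) :
    IsClosed (obedientLaws uR μ0) := by
  have h_fst : IsClosed {π : ProbabilityMeasure (Θ × A) | (π : Measure (Θ × A)).fst = μ0} := by
    have h_cont := ProbabilityMeasure.continuous_map (Ω := Θ × A) (Ω' := Θ) continuous_fst
    convert isClosed_singleton.preimage h_cont (t := {μ0}) using 1
    ext π
    exact (Subtype.ext_iff (a1 := π.map measurable_fst.aemeasurable)).symm
  have h_test : IsClosed {π : ProbabilityMeasure (Θ × A) | ∀ g : C(A, ℝ), 0 ≤ g → ∀ a',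
      0 ≤ ∫ z, g z.2 * (uR z.2 z.1 - uR a' z.1) ∂(π : Measure (Θ × A))} := by
    simp only [Set.ofPred_forall]
    refine isClosed_iInter fun g => isClosed_iInter fun _ => isClosed_iInter fun a' => ?_
    exact isClosed_le continuous_const
      (ProbabilityMeasure.continuous_integral_boundedContinuousFunction
        (.mkOfCompact ⟨_, (continuous_weighted_gain hR g a').comp continuous_swap⟩))
  exact h_fst.inter h_test

end Obedience

lemma standardBorelSpace_of_compact_metrizable (X : Type*) [TopologicalSpace X] [CompactSpace X]
    [TopologicalSpace.MetrizableSpace X] [MeasurableSpace X] [BorelSpace X] :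
    StandardBorelSpace X :=
  let := TopologicalSpace.metrizableSpaceMetric X
  inferInstance

lemma IsPosterior.comp_snd {Θ M : Type*} [MeasurableSpace Θ] [MeasurableSpace M]
    {J : Measure (Θ × M)} [IsFiniteMeasure J] {b : Experiment M Θ} (hb : IsPosterior J b) :
    b.kernel ∘ₘ J.snd = J.fst := by
  nth_rw 2 [hb]
  exact (fst_signalLaw measurable_id).symm

section Attainment

variable {A Θ : Type*} [TopologicalSpace A] [CompactSpace A] [TopologicalSpace.MetrizableSpace A]
  [Nonempty A] [MeasurableSpace A] [BorelSpace A]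
  [TopologicalSpace Θ] [CompactSpace Θ] [MeasurableSpace Θ] {uS uR : A → Θ → ℝ}

lemma exists_obedientLaw_integral_eq [OpensMeasurableSpace Θ]
    (hS : Continuous (Function.uncurry uS)) (hR : Continuous (Function.uncurry uR))
    {μ0 : ProbabilityMeasure Θ} {p : ProbabilityMeasure (ProbabilityMeasure Θ)}
    (hp : p ∈ infoPolicies μ0) :
    ∃ π ∈ obedientLaws uR μ0, ∫ z, uS z.2 z.1 ∂(π : Measure (Θ × A)) =
      ∫ ν, vFun uS uR ν ∂(p : Measure (ProbabilityMeasure Θ)) := by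
  obtain ⟨s, hs, hs_opt⟩ := exists_measurable_senderEU_eq_vFun hS hR
  let id_belief : Experiment (ProbabilityMeasure Θ) Θ := ⟨id, measurable_id⟩
  have : IsProbabilityMeasure (signalLaw (p : Measure _) id_belief s) :=
    Measure.isProbabilityMeasure_map
      (measurable_snd.prodMk (hs.comp measurable_fst)).aemeasurable
  refine ⟨⟨_, this⟩, signalLaw_mem_obedientLaws hR (mem_infoPolicies_iff.1 hp) hs
    (fun ν => (hs_opt ν).1) rfl, (integral_signalLaw hS hs).trans ?_⟩
  exact integral_congr_ae (Eventually.of_forall fun ν => (hs_opt ν).2)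

variable [TopologicalSpace.MetrizableSpace Θ] [BorelSpace Θ]

lemma exists_infoPolicy_integral_le
    (hS : Continuous (Function.uncurry uS)) (hR : Continuous (Function.uncurry uR))
    {μ0 : ProbabilityMeasure Θ} {π : ProbabilityMeasure (Θ × A)} (hπ : π ∈ obedientLaws uR μ0) :
    ∃ p ∈ infoPolicies μ0, ∫ z, uS z.2 z.1 ∂(π : Measure (Θ × A)) ≤
      ∫ ν, vFun uS uR ν ∂(p : Measure (ProbabilityMeasure Θ)) := by
  have := standardBorelSpace_of_compact_metrizable Θ
  have : Nonempty Θ := nonempty_of_isProbabilityMeasure (μ0 : Measure Θ)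
  obtain ⟨b, hb⟩ := exists_isPosterior (π : Measure (Θ × A))
  let a_law : ProbabilityMeasure A := π.map measurable_snd.aemeasurable
  have h_mean : b.kernel ∘ₘ (a_law : Measure A) = μ0 := by
    rw [← hπ.1, ← hb.comp_snd]
    rfl
  refine ⟨a_law.map b.2.aemeasurable, map_mem_infoPolicies_iff.2 h_mean, ?_⟩
  have h_value : ∫ z, uS z.2 z.1 ∂(π : Measure (Θ × A)) =
      ∫ a, senderEU uS (b.1 a) a ∂(a_law : Measure A) := by
    nth_rw 1 [hb]
    exact integral_signalLaw hS measurable_id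
  have h_int : Integrable (fun a => senderEU uS (b.1 a) a) (a_law : Measure A) := by
    simpa only [Experiment.deterministic_apply, mixedEU_diracProba hS, id] using
      integrable_mixedEU (p := (a_law : Measure A)) (ν := b) hS (.deterministic id measurable_id)
  have h_map : ∫ ν, vFun uS uR ν ∂(a_law.map b.2.aemeasurable : Measure (ProbabilityMeasure Θ)) =
      ∫ a, vFun uS uR (b.1 a) ∂(a_law : Measure A) :=
    integral_map b.2.aemeasurable (measurable_vFun hS hR).aestronglyMeasurable
  rw [h_value, h_map]
  exact integral_mono_ae h_int (integrable_vFun hS hR b.2)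
    ((ae_mem_bestResponses_of_mem_obedientLaws hR hπ hb).mono fun a ha => senderEU_le_vFun hS ha)

lemma exists_isMaxOn_integral_vFun (hS : Continuous (Function.uncurry uS))
    (hR : Continuous (Function.uncurry uR)) (μ0 : ProbabilityMeasure Θ) :
    ∃ p ∈ infoPolicies μ0, IsMaxOn (fun p : ProbabilityMeasure (ProbabilityMeasure Θ) =>
      ∫ ν, vFun uS uR ν ∂(p : Measure (ProbabilityMeasure Θ))) (infoPolicies μ0) p := by
  have h_nonempty : (obedientLaws uR μ0).Nonempty :=
    (exists_obedientLaw_integral_eq hS hR (diracProba_mem_infoPolicies μ0)).imp fun _ => And.left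
  obtain ⟨π, hπ, h_max⟩ := (isClosed_obedientLaws hR μ0).isCompact.exists_isMaxOn h_nonempty
    (ProbabilityMeasure.continuous_integral_boundedContinuousFunction
      (.mkOfCompact ⟨_, hS.comp continuous_swap⟩)).continuousOn
  obtain ⟨p, hp, h_le⟩ := exists_infoPolicy_integral_le hS hR hπ
  refine ⟨p, hp, fun q hq => ?_⟩
  obtain ⟨π', hπ', h_eq⟩ := exists_obedientLaw_integral_eq hS hR hq
  exact h_eq.ge.trans ((h_max hπ').trans h_le)

end Attainment

section FiniteDimensional

variable {E : Type*} [NormedAddCommGroup E] [NormedSpace ℝ E] [FiniteDimensional ℝ E]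

-- By compactness of the unit sphere of the dual it suffices to treat finitely many points of `C`,
-- whose convex hull is closed.
lemma exists_ne_zero_forall_le_of_convex_of_notMem {C : Set E} (hC : Convex ℝ C)
    (h_ne : C.Nonempty) {m : E} (hm : m ∉ C) : ∃ f : E →L[ℝ] ℝ, f ≠ 0 ∧ ∀ c ∈ C, f m ≤ f c := by
  obtain ⟨c₀, hc₀⟩ := h_ne
  have h_finite (t : Finset C) :
      (Metric.sphere (0 : E →L[ℝ] ℝ) 1 ∩ ⋂ c ∈ t, {f | f m ≤ f c}).Nonempty := by
    let t' : Set E := insert c₀ (Subtype.val '' (t : Set C))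
    have ht' : t'.Finite := (t.finite_toSet.image _).insert _
    have h_sub : t' ⊆ C := Set.insert_subset hc₀ (by rintro _ ⟨c, -, rfl⟩; exact c.2)
    obtain ⟨f, r, hf, hr⟩ := geometric_hahn_banach_point_closed (convex_convexHull ℝ t')
      (ht'.isClosed_convexHull ℝ) fun h => hm (convexHull_min h_sub hC h)
    have h_lt {c : E} (hc : c ∈ t') : f m < f c := hf.trans (hr c (subset_convexHull ℝ t' hc))
    have h_norm : 0 < ‖f‖ := norm_pos_iff.2 fun h => by
      simpa [h] using h_lt (Set.mem_insert c₀ _)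
    refine ⟨‖f‖⁻¹ • f, by simp [norm_smul, h_norm.ne'], Set.mem_iInter₂.2 fun c hc => ?_⟩
    exact mul_le_mul_of_nonneg_left (h_lt (Set.mem_insert_of_mem _ ⟨c, hc, rfl⟩)).le
      (inv_nonneg.2 h_norm.le)
  obtain ⟨f, hf, h_le⟩ := (isCompact_sphere (0 : E →L[ℝ] ℝ) 1).inter_iInter_nonempty
    (fun c : C => {f : E →L[ℝ] ℝ | f m ≤ f c})
    (fun c => isClosed_le (by fun_prop) (by fun_prop)) h_finite
  exact ⟨f, ne_zero_of_mem_unit_sphere ⟨f, hf⟩, fun c hc => Set.mem_iInter.1 h_le ⟨c, hc⟩⟩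

lemma finrank_ker_lt {f : E →L[ℝ] ℝ} (hf : f ≠ 0) :
    Module.finrank ℝ f.ker < Module.finrank ℝ E := by
  refine Submodule.finrank_lt fun h => hf ?_
  ext x
  exact LinearMap.mem_ker.1 (h ▸ Submodule.mem_top : x ∈ f.ker)

variable {X : Type*} [MeasurableSpace X] {p : Measure X} [IsProbabilityMeasure p]

lemma exists_ae_integral_eq_of_notMem_convex {C : Set E} (hC : Convex ℝ C) {Y : X → E}
    (hY : Integrable Y p) (hYC : ∀ᵐ x ∂p, Y x ∈ C) (hm : ∫ x, Y x ∂p ∉ C) :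
    ∃ f : E →L[ℝ] ℝ, f ≠ 0 ∧ ∀ᵐ x ∂p, f (∫ x, Y x ∂p) = f (Y x) := by
  obtain ⟨x₀, hx₀⟩ := hYC.exists
  obtain ⟨f, hf, h_le⟩ := exists_ne_zero_forall_le_of_convex_of_notMem hC ⟨_, hx₀⟩ hm
  have h_int : Integrable (fun x => f (Y x)) p := f.integrable_comp hY
  refine ⟨f, hf, (integral_eq_iff_of_ae_le (integrable_const _) h_int
    (hYC.mono fun x => h_le _)).1 ?_⟩
  rw [integral_const, f.integral_comp_comm hY, probReal_univ, one_smul]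

end FiniteDimensional

section

variable {X : Type*} [MeasurableSpace X] {p : Measure X} [IsProbabilityMeasure p]

-- Otherwise a nonzero functional separates the mean from `C`, so it is almost surely constant and
-- the dimension drops.
lemma integral_mem_of_convex {E : Type*} [NormedAddCommGroup E] [NormedSpace ℝ E]
    [FiniteDimensional ℝ E] {C : Set E} (hC : Convex ℝ C) {Y : X → E} (hY : Integrable Y p)
    (hYC : ∀ᵐ x ∂p, Y x ∈ C) : ∫ x, Y x ∂p ∈ C := by
  induction h_rank : Module.finrank ℝ E using Nat.strong_induction_on generalizing E with | _ n ih
  by_contra hm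
  obtain ⟨f, hf, h_const⟩ := exists_ae_integral_eq_of_notMem_convex hC hY hYC hm
  set m := ∫ x, Y x ∂p with hm_def
  obtain ⟨g, hg⟩ := f.ker.subtype.exists_leftInverse_of_injective f.ker.ker_subtype
  have hg_apply (k : f.ker) : g k = k := LinearMap.congr_fun hg k
  have h_coe {y : E} (hy : f m = f y) : (g (y - m) : E) = y - m := by
    have h_ker : y - m ∈ f.ker := by simp [hy]
    exact congrArg Subtype.val (hg_apply ⟨y - m, h_ker⟩)
  let G : E →L[ℝ] f.ker := g.toContinuousLinearMap
  have h_sub : Integrable (fun x => Y x - m) p := hY.sub (integrable_const m)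
  have h_mean : ∫ x, G (Y x - m) ∂p = 0 := by
    rw [G.integral_comp_comm h_sub, integral_sub hY (integrable_const m), integral_const,
      probReal_univ, one_smul, ← hm_def, sub_self, map_zero]
  have h_mem : ∫ x, G (Y x - m) ∂p ∈ {k : f.ker | (k : E) + m ∈ C} := by
    refine ih _ (h_rank ▸ finrank_ker_lt hf) ?_ (G.integrable_comp h_sub) ?_ rfl
    · exact (hC.translate_preimage_left m).linear_preimage f.ker.subtype
    · filter_upwards [h_const, hYC] with x hx hxC
      simpa only [Set.mem_ofPred_eq, G, LinearMap.coe_toContinuousLinearMap', h_coe hx,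
        sub_add_cancel] using hxC
  rw [h_mean] at h_mem
  exact hm (by simpa using h_mem)

end

section Caratheodory

variable {E ι : Type*} [AddCommGroup E] [Module ℝ E]

lemma exists_relation_of_not_linearIndepOn {x : ι → E} {l : E →ₗ[ℝ] ℝ} (t : ι → ℝ) {s : Finset ι}
    (hl : ∀ i ∈ s, 0 < l (x i)) (hs : ¬ LinearIndepOn ℝ x (s : Set ι)) :
    ∃ g : ι → ℝ, ∑ i ∈ s, g i • x i = 0 ∧ 0 ≤ ∑ i ∈ s, g i * t i ∧ ∃ i ∈ s, g i < 0 := by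
  obtain ⟨g, hg, h_ne, ht⟩ : ∃ g : ι → ℝ, ∑ i ∈ s, g i • x i = 0 ∧ (∃ i ∈ s, g i ≠ 0) ∧
      0 ≤ ∑ i ∈ s, g i * t i := by
    obtain ⟨g, hg, h_ne⟩ := not_linearIndepOn_finset_iff.1 hs
    rcases le_total 0 (∑ i ∈ s, g i * t i) with ht | ht
    · exact ⟨g, hg, h_ne, ht⟩
    · exact ⟨-g, by simp [hg], by simpa using h_ne, by simpa using ht⟩
  refine ⟨g, hg, ht, ?_⟩
  by_contra! h_nonneg
  obtain ⟨i, hi, h_ne⟩ := h_ne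
  have h_sum : ∑ i ∈ s, g i * l (x i) = 0 := by simpa using congrArg l hg
  have h_zero := (Finset.sum_eq_zero_iff_of_nonneg fun i hi =>
    mul_nonneg (h_nonneg i hi) (hl i hi).le).1 h_sum i hi
  exact (mul_ne_zero h_ne (hl i hi).ne') h_zero

-- Move along `g` until the first weight vanishes.
lemma exists_add_mul_nonneg_eq_zero {s : Finset ι} {w g : ι → ℝ} (hw : ∀ i ∈ s, 0 ≤ w i)
    (hg : ∃ i ∈ s, g i < 0) :
    ∃ c, 0 ≤ c ∧ (∀ i ∈ s, 0 ≤ w i + c * g i) ∧ ∃ j ∈ s, w j + c * g j = 0 := by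
  obtain ⟨i, hi, hgi⟩ := hg
  obtain ⟨j, hj, h_min⟩ := Finset.exists_min_image (s.filter (g · < 0)) (fun i => w i / -g i)
    ⟨i, Finset.mem_filter.2 ⟨hi, hgi⟩⟩
  obtain ⟨hjs, hgj⟩ := Finset.mem_filter.1 hj
  have hc : 0 ≤ w j / -g j := div_nonneg (hw j hjs) (neg_pos.2 hgj).le
  refine ⟨w j / -g j, hc, fun k hk => ?_, j, hjs, by field_simp [hgj.ne]; ring⟩
  rcases lt_or_ge (g k) 0 with hgk | hgk
  · have h_le := h_min k (Finset.mem_filter.2 ⟨hk, hgk⟩)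
    rw [le_div_iff₀ (neg_pos.2 hgk)] at h_le
    linarith
  · exact add_nonneg (hw k hk) (mul_nonneg hc hgk)

lemma exists_linearIndepOn_sum_eq {x : ι → E} {l : E →ₗ[ℝ] ℝ} (t : ι → ℝ) (s : Finset ι)
    (hl : ∀ i ∈ s, 0 < l (x i)) (w : ι → ℝ) (hw : ∀ i ∈ s, 0 ≤ w i) :
    ∃ s' ⊆ s, ∃ w' : ι → ℝ, LinearIndepOn ℝ x (s' : Set ι) ∧ (∀ i ∈ s', 0 ≤ w' i) ∧
      ∑ i ∈ s', w' i • x i = ∑ i ∈ s, w i • x i ∧ ∑ i ∈ s, w i * t i ≤ ∑ i ∈ s', w' i * t i := by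
  classical
  induction s using Finset.strongInduction generalizing w with | H s ih => ?_
  by_cases h_indep : LinearIndepOn ℝ x (s : Set ι)
  · exact ⟨s, subset_rfl, w, h_indep, hw, rfl, le_rfl⟩
  obtain ⟨g, hg, hgt, hg_neg⟩ := exists_relation_of_not_linearIndepOn t hl h_indep
  obtain ⟨c, hc, h_nonneg, j, hj, h_zero⟩ := exists_add_mul_nonneg_eq_zero hw hg_neg
  obtain ⟨s', hs', w', h_indep', hw', h_sum, h_le⟩ := ih _ (Finset.erase_ssubset hj)
    (fun i hi => hl i (Finset.mem_of_mem_erase hi)) (fun i => w i + c * g i)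
    (fun i hi => h_nonneg i (Finset.mem_of_mem_erase hi))
  refine ⟨s', hs'.trans (s.erase_subset j), w', h_indep', hw', ?_, le_trans ?_ h_le⟩
  · rw [h_sum, Finset.sum_erase s (by simp [h_zero])]
    simp only [add_smul, Finset.sum_add_distrib, mul_smul, ← Finset.smul_sum, hg, smul_zero,
      add_zero]
  · rw [Finset.sum_erase s (by simp [h_zero])]
    simp only [add_mul, Finset.sum_add_distrib, mul_assoc, ← Finset.mul_sum]
    exact le_add_of_nonneg_right (mul_nonneg hc hgt)

end Caratheodory

lemma sum_extend_smul_comp_extend {ι κ N F : Type*} [Fintype ι] [Fintype κ] [AddCommMonoid F]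
    [Module ℝ F] (e : ι ↪ κ) (w : ι → ℝ) (y : ι → N) (y₀ : κ → N) (f : N → F) :
    ∑ k, Function.extend e w 0 k • f (Function.extend e y y₀ k) = ∑ i, w i • f (y i) := by
  refine (Fintype.sum_of_injective e e.injective _ _ (fun k hk => ?_) fun i => ?_).symm
  · rw [Function.extend_apply' _ _ _ hk, Pi.zero_apply, zero_smul]
  · rw [e.injective.extend_apply, e.injective.extend_apply]

section FiniteSupport

variable {E N : Type*} [NormedAddCommGroup E] [NormedSpace ℝ E] [FiniteDimensional ℝ E]
  [MeasurableSpace N] {p : Measure N} [IsProbabilityMeasure p] {x : N → E} {l : E →ₗ[ℝ] ℝ}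
  {T : N → ℝ}

lemma exists_linearIndepOn_integral_le (hl : ∀ n, 0 < l (x n)) (hx : Integrable x p)
    (hT : Integrable T p) :
    ∃ (s : Finset N) (w : N → ℝ), LinearIndepOn ℝ x (s : Set N) ∧ (∀ n ∈ s, 0 ≤ w n) ∧
      ∑ n ∈ s, w n • x n = ∫ n, x n ∂p ∧ ∫ n, T n ∂p ≤ ∑ n ∈ s, w n * T n := by
  have h_mem : ∫ n, (x n, T n) ∂p ∈ convexHull ℝ (Set.range fun n => (x n, T n)) :=
    integral_mem_of_convex (convex_convexHull ℝ _) (hx.prodMk hT)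
      (Eventually.of_forall fun n => subset_convexHull ℝ _ (Set.mem_range_self n))
  rw [convexHull_range_eq_exists_affineCombination, integral_pair hx hT] at h_mem
  obtain ⟨s, w, hw, h_sum, h_comb⟩ := h_mem
  rw [Finset.affineCombination_eq_linear_combination _ _ _ h_sum, Prod.ext_iff, Prod.fst_sum,
    Prod.snd_sum] at h_comb
  obtain ⟨s', -, w', h_indep, hw', hx', hT'⟩ :=
    exists_linearIndepOn_sum_eq T s (fun n _ => hl n) w hw
  exact ⟨s', w', h_indep, hw', hx'.trans h_comb.1, h_comb.2.symm.trans_le hT'⟩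

lemma exists_weights_integral_le {κ : Type*} [Fintype κ]
    (h_card : Module.finrank ℝ E ≤ Fintype.card κ) (hl : ∀ n, 0 < l (x n)) (hx : Integrable x p)
    (hT : Integrable T p) :
    ∃ (w : κ → ℝ) (y : κ → N), (∀ k, 0 ≤ w k) ∧
      ∑ k, w k • x (y k) = ∫ n, x n ∂p ∧ ∫ n, T n ∂p ≤ ∑ k, w k * T (y k) := by
  obtain ⟨s, w, h_indep, hw, h_mean, h_le⟩ := exists_linearIndepOn_integral_le hl hx hT
  obtain ⟨e⟩ := Function.Embedding.nonempty_of_card_le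
    (h_indep.linearIndependent.fintype_card_le_finrank.trans h_card)
  have : Nonempty N := nonempty_of_isProbabilityMeasure p
  refine ⟨Function.extend e (fun n => w n) 0,
    Function.extend e (fun n => n) fun _ => Classical.arbitrary N, fun k => ?_, ?_, ?_⟩
  · by_cases hk : k ∈ Set.range e
    · obtain ⟨n, rfl⟩ := hk
      simpa only [e.injective.extend_apply] using hw n n.2
    · rw [Function.extend_apply' _ _ _ hk, Pi.zero_apply]
  · exact (sum_extend_smul_comp_extend e (fun n : s => w n) _ _ x).trans
      ((Finset.sum_coe_sort s fun n => w n • x n).trans h_mean)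
  · rw [← Finset.sum_coe_sort s] at h_le
    exact h_le.trans_eq (sum_extend_smul_comp_extend e (fun n : s => w n) _ _ T).symm

end FiniteSupport

section FiniteStates

variable {Θ : Type*} [MeasurableSpace Θ] [MeasurableSingletonClass Θ]

lemma exists_integral_eq_sum [Fintype Θ] {w : Θ → ℝ} (hw : ∀ θ, 0 ≤ w θ) (h_sum : ∑ θ, w θ = 1) :
    ∃ q : ProbabilityMeasure Θ, ∀ f : Θ → ℝ, ∫ θ, f θ ∂(q : Measure Θ) = ∑ θ, w θ * f θ := by
  have h_total : ∑ θ, ENNReal.ofReal (w θ) = 1 := by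
    rw [← ENNReal.ofReal_sum_of_nonneg fun θ _ => hw θ, h_sum, ENNReal.ofReal_one]
  refine ⟨⟨(PMF.ofFintype _ h_total).toMeasure, inferInstance⟩, fun f => ?_⟩
  exact (PMF.integral_eq_sum _ f).trans (by simp [ENNReal.toReal_ofReal (hw _)])

lemma exists_prior_signal_integral_le [Finite Θ] {μ0 : ProbabilityMeasure Θ}
    {p : ProbabilityMeasure (ProbabilityMeasure Θ)} (hp : p ∈ infoPolicies μ0)
    {T : ProbabilityMeasure Θ → ℝ} (hT : Integrable T (p : Measure (ProbabilityMeasure Θ))) :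
    ∃ (q : ProbabilityMeasure Θ) (ν : Experiment Θ Θ),
      ν.kernel ∘ₘ (q : Measure Θ) = μ0 ∧ ∫ ν, T ν ∂(p : Measure (ProbabilityMeasure Θ)) ≤
        ∫ θ, T (ν.1 θ) ∂(q : Measure Θ) := by
  have := Fintype.ofFinite Θ
  let x (ν : ProbabilityMeasure Θ) (θ : Θ) : ℝ := (ν : Measure Θ).real {θ}
  let l : (Θ → ℝ) →ₗ[ℝ] ℝ := ∑ θ, LinearMap.proj θ
  have hl (ν : ProbabilityMeasure Θ) : l (x ν) = 1 := by
    simpa [l, x] using sum_measureReal_singleton (μ := (ν : Measure Θ)) Finset.univ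
  have hx_int (θ : Θ) : Integrable (fun ν => x ν θ) (p : Measure (ProbabilityMeasure Θ)) :=
    integrable_of_abs_le (C := 1) ((Measure.measurable_coe (measurableSet_singleton θ)).comp
      measurable_subtype_coe).ennreal_toReal fun ν => by
        simpa only [x, abs_of_nonneg measureReal_nonneg] using measureReal_le_one
  obtain ⟨w, ν, hw, h_mean, h_le⟩ := exists_weights_integral_le
    (Module.finrank_fintype_fun_eq_card ℝ).le (fun ν => (hl ν).symm ▸ one_pos) (.of_eval hx_int) hT
  have h_mean' : ∑ θ, w θ • x (ν θ) = x μ0 := by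
    rw [h_mean]
    ext θ
    rw [eval_integral hx_int]
    exact hp {θ} (measurableSet_singleton θ)
  obtain ⟨q, hq⟩ := exists_integral_eq_sum hw (by simpa [hl] using congrArg l h_mean')
  let signal : Experiment Θ Θ := ⟨ν, measurable_of_finite ν⟩
  refine ⟨q, signal, Measure.ext_of_singleton fun θ => ?_, by rwa [hq]⟩
  rw [← measureReal_eq_measureReal_iff (measure_ne_top _ _) (measure_ne_top _ _),
    comp_kernel_real_apply (measurableSet_singleton θ), hq]
  exact (Finset.sum_apply θ _ _).symm.trans (congrFun h_mean' θ)

end FiniteStates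

/-- The message space `M` is large enough for the sender: it contains a measurable copy of the
action space, or the state space is finite and `M` contains a measurable copy of it. -/
def RichMessages (A Θ M : Type*) [MeasurableSpace A] [MeasurableSpace Θ] [MeasurableSpace M] :
    Prop :=
  (∃ e : A → M, MeasurableEmbedding e) ∨ (Finite Θ ∧ ∃ f : Θ → M, MeasurableEmbedding f)

lemma richMessages_of_polish {A Θ M : Type*} [MeasurableSpace A] [StandardBorelSpace A]
    [MeasurableSpace Θ] [MeasurableSingletonClass Θ]
    [TopologicalSpace M] [PolishSpace M] [MeasurableSpace M] [BorelSpace M]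
    (hM : Uncountable M ∨ (Finite Θ ∧ ∃ f : Θ → M, Function.Injective f)) :
    RichMessages A Θ M := by
  rcases hM with hM | ⟨hΘ, f, hf⟩
  · obtain ⟨e, he⟩ := exists_measurableEmbedding_real A
    let φ : ℝ ≃ᵐ M := PolishSpace.measurableEquivOfNotCountable not_countable not_countable
    exact .inl ⟨φ ∘ e, φ.measurableEmbedding.comp he⟩
  · exact .inr ⟨hΘ, f, hf, measurable_of_finite f, fun S _ =>
      (Set.toFinite (f '' S)).measurableSet⟩

section Implementation

universe u

variable {A M : Type*} {Θ : Type u} [MeasurableSpace M]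
  [TopologicalSpace A] [CompactSpace A] [TopologicalSpace.MetrizableSpace A]
  [Nonempty A] [MeasurableSpace A] [BorelSpace A]
  [TopologicalSpace Θ] [CompactSpace Θ] [TopologicalSpace.MetrizableSpace Θ]
  [MeasurableSpace Θ] [BorelSpace Θ] {uS uR : A → Θ → ℝ} {μ0 : ProbabilityMeasure Θ}
  {p : ProbabilityMeasure (ProbabilityMeasure Θ)}

-- With a copy of `A` among the messages the sender recommends the action `s ν`; with finitely many
-- states she first replaces `p` by a policy supported on at most `|Θ|` posteriors.
lemma exists_jointLaw_eq_signalLaw_of_richMessages (hM : RichMessages A Θ M)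
    (hp : p ∈ infoPolicies μ0) {s : ProbabilityMeasure Θ → A} (hs : Measurable s)
    {T : ProbabilityMeasure Θ → ℝ} (hT : Integrable T (p : Measure (ProbabilityMeasure Θ))) :
    ∃ (X : Type u) (_ : MeasurableSpace X) (q : ProbabilityMeasure X) (ν : Experiment X Θ)
      (h : X → M) (g : M → A) (ψ : Experiment Θ M), Measurable h ∧ Measurable g ∧
        (∀ x, g (h x) = s (ν.1 x)) ∧ jointLaw μ0 ψ = signalLaw (q : Measure X) ν h ∧
        ∫ ν, T ν ∂(p : Measure (ProbabilityMeasure Θ)) ≤ ∫ x, T (ν.1 x) ∂(q : Measure X) := by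
  rcases hM with ⟨e, he⟩ | ⟨hΘ, f, hf⟩
  · have := standardBorelSpace_of_compact_metrizable A
    obtain ⟨g, hg, hge⟩ := he.exists_measurable_extend measurable_id fun _ => ‹Nonempty A›
    obtain ⟨ψ, hψ⟩ := exists_jointLaw_eq_signalLaw (mem_infoPolicies_iff.1 hp) hs he.measurable
    exact ⟨_, _, p, ⟨id, measurable_id⟩, e ∘ s, g, ψ, he.measurable.comp hs, hg,
      fun ν => congrFun hge (s ν), hψ, le_rfl⟩
  · have := standardBorelSpace_of_compact_metrizable Θ
    have : Nonempty Θ := nonempty_of_isProbabilityMeasure (μ0 : Measure Θ)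
    obtain ⟨q, ν, h_mean, h_le⟩ := exists_prior_signal_integral_le hp hT
    obtain ⟨g, hg, hgf⟩ := hf.exists_measurable_extend (hs.comp ν.2) fun _ => ‹Nonempty A›
    obtain ⟨ψ, hψ⟩ := exists_jointLaw_eq_signalLaw h_mean measurable_id hf.measurable
    exact ⟨Θ, _, q, ν, f, g, ψ, hf.measurable, hg, congrFun hgf, hψ, h_le⟩

lemma exists_experiment_integral_wFun_le (hS : Continuous (Function.uncurry uS))
    (hR : Continuous (Function.uncurry uR)) (hM : RichMessages A Θ M) (hp : p ∈ infoPolicies μ0) :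
    ∃ ψ : Experiment Θ M, ∀ (b : Experiment M Θ) (κ : Experiment M A),
      IsPosterior (jointLaw μ0 ψ) b → BestResponds uR b κ →
        ∫ ν, wFun uS uR ν ∂(p : Measure (ProbabilityMeasure Θ)) ≤
          expectedPayoff uS (jointLaw μ0 ψ) κ := by
  obtain ⟨s, hs, hs_opt⟩ := exists_measurable_senderEU_eq_wFun hS hR
  obtain ⟨X, _, q, ν, h, g, ψ, hh, hg, h_rec, hψ, h_le⟩ :=
    exists_jointLaw_eq_signalLaw_of_richMessages hM hp hs (integrable_wFun hS hR measurable_id)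
  refine ⟨ψ, fun b κ hb hκ => h_le.trans ?_⟩
  exact integral_wFun_le_expectedPayoff hS hR hh hψ hb hg
    (fun x => h_rec x ▸ (hs_opt (ν.1 x)).1) hκ

lemma exists_experiment_integral_vFun_le (hS : Continuous (Function.uncurry uS))
    (hR : Continuous (Function.uncurry uR)) (hM : RichMessages A Θ M) (hp : p ∈ infoPolicies μ0) :
    ∃ ψ : Experiment Θ M, ∀ b : Experiment M Θ, IsPosterior (jointLaw μ0 ψ) b →
      ∫ ν, vFun uS uR ν ∂(p : Measure (ProbabilityMeasure Θ)) ≤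
        ∫ m, vFun uS uR (b.1 m) ∂(jointLaw μ0 ψ).snd := by
  obtain ⟨s, hs, hs_opt⟩ := exists_measurable_senderEU_eq_vFun hS hR
  obtain ⟨X, _, q, ν, h, g, ψ, hh, hg, h_rec, hψ, h_le⟩ :=
    exists_jointLaw_eq_signalLaw_of_richMessages hM hp hs (integrable_vFun hS hR measurable_id)
  refine ⟨ψ, fun b hb => h_le.trans ?_⟩
  simpa only [h_rec, (hs_opt _).2, id] using integral_senderEU_le_integral_vFun hS hR hh hψ hb hg
    fun x => h_rec x ▸ (hs_opt (ν.1 x)).1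

end Implementation

namespace Experiment

open unitInterval

/-- Runs `ψ₁` with probability `t` and `ψ₀` otherwise, independently of the input. -/
noncomputable def mixture {X Y : Type*} [MeasurableSpace X] [MeasurableSpace Y] (t : I)
    (ψ₁ ψ₀ : Experiment X Y) : Experiment X Y :=
  ⟨fun x => ⟨toNNReal t • (ψ₁.1 x : Measure Y) + toNNReal (σ t) • (ψ₀.1 x : Measure Y),
    inferInstance⟩, Measurable.subtype_mk (Measure.measurable_of_measurable_coe _ fun B hB => by
      simp only [Measure.add_apply, Measure.smul_apply]
      exact ((ψ₁.kernel.measurable_coe hB).const_smul _).add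
        ((ψ₀.kernel.measurable_coe hB).const_smul _))⟩

variable {A Θ M : Type*} [MeasurableSpace M]
  [TopologicalSpace A] [CompactSpace A] [TopologicalSpace.MetrizableSpace A]
  [MeasurableSpace A] [BorelSpace A]
  [TopologicalSpace Θ] [CompactSpace Θ] [MeasurableSpace Θ] [OpensMeasurableSpace Θ]
  {u : A → Θ → ℝ}

lemma mixedEU_mixture (hu : Continuous (Function.uncurry u)) (t : I) (κ₁ κ₀ : Experiment M A)
    (μ : ProbabilityMeasure Θ) (m : M) :
    mixedEU u μ ((mixture t κ₁ κ₀).1 m) =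
      t * mixedEU u μ (κ₁.1 m) + (1 - t) * mixedEU u μ (κ₀.1 m) := by
  have h_int (κ : Experiment M A) (c : NNReal) :
      Integrable (senderEU u μ) (c • (κ.1 m : Measure A)) :=
    (integrable_senderEU hu μ (κ.1 m)).smul_measure_nnreal
  exact (integral_add_measure (h_int κ₁ _) (h_int κ₀ _)).trans
    (congrArg₂ _ (integral_smul_nnreal_measure _ _) (integral_smul_nnreal_measure _ _))

end Experiment

section Strategies

variable {A Θ M : Type*} [MeasurableSpace M]
  [TopologicalSpace A] [CompactSpace A] [TopologicalSpace.MetrizableSpace A]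
  [MeasurableSpace A] [BorelSpace A]
  [TopologicalSpace Θ] [CompactSpace Θ] [MeasurableSpace Θ] [OpensMeasurableSpace Θ]
  {uS uR : A → Θ → ℝ} {J : Measure (Θ × M)} [IsProbabilityMeasure J] {b : Experiment M Θ}

lemma BestResponds.mixture (hR : Continuous (Function.uncurry uR)) {κ₁ κ₀ : Experiment M A}
    (h₁ : BestResponds uR b κ₁) (h₀ : BestResponds uR b κ₀) (t : unitInterval) :
    BestResponds uR b (.mixture t κ₁ κ₀) := fun m => by
  rw [Experiment.mixedEU_mixture hR, h₁ m, h₀ m]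
  ring

lemma IsPosterior.exists_expectedPayoff_mixture_eq (hb : IsPosterior J b)
    (hS : Continuous (Function.uncurry uS)) {κ₁ κ₀ : Experiment M A} {s : ℝ}
    (hs : s ∈ Set.Icc (expectedPayoff uS J κ₀) (expectedPayoff uS J κ₁)) :
    ∃ t, expectedPayoff uS J (.mixture t κ₁ κ₀) = s := by
  obtain ⟨t, ht, rfl⟩ : s ∈ AffineMap.lineMap (expectedPayoff uS J κ₀) (expectedPayoff uS J κ₁) ''
      Set.Icc (0 : ℝ) 1 := by
    rwa [← segment_eq_image_lineMap, segment_eq_Icc (hs.1.trans hs.2)]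
  refine ⟨⟨t, ht⟩, ?_⟩
  simp only [hb.expectedPayoff_eq hS, Experiment.mixedEU_mixture hS]
  rw [integral_add ((integrable_mixedEU hS κ₁).const_mul _)
    ((integrable_mixedEU hS κ₀).const_mul _), integral_const_mul, integral_const_mul,
    AffineMap.lineMap_apply_ring]
  ring

variable [Nonempty A]

lemma IsPosterior.expectedPayoff_le_integral_vFun (hb : IsPosterior J b)
    (hS : Continuous (Function.uncurry uS)) (hR : Continuous (Function.uncurry uR))
    {κ : Experiment M A} (hκ : BestResponds uR b κ) :
    expectedPayoff uS J κ ≤ ∫ m, vFun uS uR (b.1 m) ∂J.snd := by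
  rw [hb.expectedPayoff_eq hS]
  exact integral_mono (integrable_mixedEU hS κ) (integrable_vFun hS hR b.2)
    fun m => mixedEU_le_vFun hS hR (hκ m)

lemma IsPosterior.exists_bestResponds_expectedPayoff_eq (hb : IsPosterior J b)
    (hS : Continuous (Function.uncurry uS)) (hR : Continuous (Function.uncurry uR))
    {s : ProbabilityMeasure Θ → A} (hs : Measurable s) (h_opt : ∀ ν, s ν ∈ bestResponses uR ν) :
    ∃ κ : Experiment M A, BestResponds uR b κ ∧
      expectedPayoff uS J κ = ∫ m, senderEU uS (b.1 m) (s (b.1 m)) ∂J.snd := by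
  refine ⟨.deterministic _ (hs.comp b.2), fun m =>
    (mixedEU_deterministic_eq_maxEU_iff (hs.comp b.2) hR).2 (h_opt (b.1 m)), ?_⟩
  simp only [hb.expectedPayoff_eq hS, Experiment.deterministic_apply, mixedEU_diracProba hS,
    Function.comp_apply]

lemma IsPosterior.exists_expectedPayoff_eq_integral_vFun (hb : IsPosterior J b)
    (hS : Continuous (Function.uncurry uS)) (hR : Continuous (Function.uncurry uR)) :
    ∃ κ : Experiment M A, BestResponds uR b κ ∧
      expectedPayoff uS J κ = ∫ m, vFun uS uR (b.1 m) ∂J.snd := by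
  obtain ⟨s, hs, hs_opt⟩ := exists_measurable_senderEU_eq_vFun hS hR
  simpa only [(hs_opt _).2] using
    hb.exists_bestResponds_expectedPayoff_eq hS hR hs fun ν => (hs_opt ν).1

lemma IsPosterior.exists_expectedPayoff_eq_integral_wFun (hb : IsPosterior J b)
    (hS : Continuous (Function.uncurry uS)) (hR : Continuous (Function.uncurry uR)) :
    ∃ κ : Experiment M A, BestResponds uR b κ ∧
      expectedPayoff uS J κ = ∫ m, wFun uS uR (b.1 m) ∂J.snd := by
  obtain ⟨s, hs, hs_opt⟩ := exists_measurable_senderEU_eq_wFun hS hR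
  simpa only [(hs_opt _).2] using
    hb.exists_bestResponds_expectedPayoff_eq hS hR hs fun ν => (hs_opt ν).1

end Strategies

section Values

variable {A Θ M : Type*} [MeasurableSpace Θ] [MeasurableSpace M]
  {uS uR : A → Θ → ℝ} {μ0 : ProbabilityMeasure Θ}
  {p : ProbabilityMeasure (ProbabilityMeasure Θ)} {ψ : Experiment Θ M} {b : Experiment M Θ}

lemma exists_infoPolicy_integral_posterior (hb : IsPosterior (jointLaw μ0 ψ) b) :
    ∃ p ∈ infoPolicies μ0, ∀ T : ProbabilityMeasure Θ → ℝ, Measurable T →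
      ∫ m, T (b.1 m) ∂(jointLaw μ0 ψ).snd =
        ∫ ν, T ν ∂(p : Measure (ProbabilityMeasure Θ)) := by
  let q : ProbabilityMeasure M := ⟨(jointLaw μ0 ψ).snd, inferInstance⟩
  refine ⟨q.map b.2.aemeasurable,
    map_mem_infoPolicies_iff.2 (hb.comp_snd.trans (fst_jointLaw μ0 ψ)), fun T hT => ?_⟩
  exact (integral_map b.2.aemeasurable hT.aestronglyMeasurable).symm

variable [TopologicalSpace A] [CompactSpace A] [TopologicalSpace.MetrizableSpace A] [Nonempty A]
  [TopologicalSpace Θ] [CompactSpace Θ] [OpensMeasurableSpace Θ]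
  (hS : Continuous (Function.uncurry uS)) (hR : Continuous (Function.uncurry uR))
include hS hR

lemma integral_vFun_le_vHat (hp : p ∈ infoPolicies μ0) :
    ∫ ν, vFun uS uR ν ∂(p : Measure (ProbabilityMeasure Θ)) ≤ vHat uS uR μ0 := by
  obtain ⟨C, hC⟩ := exists_abs_le_of_continuous hS
  refine le_csSup ⟨C, ?_⟩ (Set.mem_image_of_mem _ hp)
  rintro _ ⟨q, -, rfl⟩
  exact (abs_le.1 (abs_integral_le_of_abs_le (abs_vFun_le hS hR hC))).2

lemma integral_wFun_le_wHat (hp : p ∈ infoPolicies μ0) :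
    ∫ ν, wFun uS uR ν ∂(p : Measure (ProbabilityMeasure Θ)) ≤ wHat uS uR μ0 := by
  obtain ⟨C, hC⟩ := exists_abs_le_of_continuous hS
  refine le_csSup ⟨C, ?_⟩ (Set.mem_image_of_mem _ hp)
  rintro _ ⟨q, -, rfl⟩
  exact (abs_le.1 (abs_integral_le_of_abs_le (abs_wFun_le hS hR hC))).2

lemma integral_vFun_posterior_le_vHat (hb : IsPosterior (jointLaw μ0 ψ) b) :
    ∫ m, vFun uS uR (b.1 m) ∂(jointLaw μ0 ψ).snd ≤ vHat uS uR μ0 := by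
  obtain ⟨p, hp, h_eq⟩ := exists_infoPolicy_integral_posterior hb
  exact (h_eq _ (measurable_vFun hS hR)).trans_le (integral_vFun_le_vHat hS hR hp)

lemma integral_wFun_posterior_le_wHat (hb : IsPosterior (jointLaw μ0 ψ) b) :
    ∫ m, wFun uS uR (b.1 m) ∂(jointLaw μ0 ψ).snd ≤ wHat uS uR μ0 := by
  obtain ⟨p, hp, h_eq⟩ := exists_infoPolicy_integral_posterior hb
  exact (h_eq _ (measurable_wFun hS hR)).trans_le (integral_wFun_le_wHat hS hR hp)

variable [MeasurableSpace A] [BorelSpace A]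

lemma exists_isEquilibrium_iff {s : ℝ} :
    (∃ (ψ : Experiment Θ M) (α : M → Experiment Θ M → ProbabilityMeasure A)
        (β : M → Experiment Θ M → ProbabilityMeasure Θ),
      IsEquilibrium uS uR μ0 ψ α β ∧ s = senderPayoff uS μ0 ψ α) ↔
    ∃ (ψ : Experiment Θ M) (κ : Experiment Θ M → Experiment M A)
      (b : Experiment Θ M → Experiment M Θ),
      (∀ ψ', IsPosterior (jointLaw μ0 ψ') (b ψ')) ∧ (∀ ψ', BestResponds uR (b ψ') (κ ψ')) ∧
        (∀ ψ', expectedPayoff uS (jointLaw μ0 ψ') (κ ψ') ≤ s) ∧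
          expectedPayoff uS (jointLaw μ0 ψ) (κ ψ) = s := by
  constructor
  · rintro ⟨ψ, α, β, ⟨hα, hβ, h_opt, h_best, h_bayes⟩, rfl⟩
    refine ⟨ψ, fun ψ' => ⟨_, hα ψ'⟩, fun ψ' => ⟨_, hβ ψ'⟩,
      fun ψ' => (isPosterior_jointLaw_iff μ0 ψ' _).2 (h_bayes ψ'),
      fun ψ' m => (measure_bestResponses_eq_one_iff hR).1 (h_best ψ' m), fun ψ' => ?_,
      (senderPayoff_eq_expectedPayoff hS μ0 ψ (hα ψ)).symm⟩
    exact (senderPayoff_eq_expectedPayoff hS μ0 ψ' (hα ψ')).symm.trans_le (h_opt ψ')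
  · rintro ⟨ψ, κ, b, hb, hκ, h_opt, h_eq⟩
    have h_payoff (ψ' : Experiment Θ M) :
        senderPayoff uS μ0 ψ' (fun m ψ' => (κ ψ').1 m) =
          expectedPayoff uS (jointLaw μ0 ψ') (κ ψ') :=
      senderPayoff_eq_expectedPayoff hS μ0 ψ' (κ ψ').2
    refine ⟨ψ, fun m ψ' => (κ ψ').1 m, fun m ψ' => (b ψ').1 m,
      ⟨fun ψ' => (κ ψ').2, fun ψ' => (b ψ').2, fun ψ' => ?_,
        fun ψ' m => (measure_bestResponses_eq_one_iff hR).2 (hκ ψ' m),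
        fun ψ' => (isPosterior_jointLaw_iff μ0 ψ' (b ψ')).1 (hb ψ')⟩,
      ((h_payoff ψ).trans h_eq).symm⟩
    rw [h_payoff, h_payoff, h_eq]
    exact h_opt ψ'

end Values

section Equilibria

variable {A Θ M : Type*} [MeasurableSpace M]
  [TopologicalSpace A] [CompactSpace A] [TopologicalSpace.MetrizableSpace A] [Nonempty A]
  [MeasurableSpace A] [BorelSpace A]
  [TopologicalSpace Θ] [CompactSpace Θ] [TopologicalSpace.MetrizableSpace Θ]
  [MeasurableSpace Θ] [BorelSpace Θ] {uS uR : A → Θ → ℝ} {μ0 : ProbabilityMeasure Θ}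
  (hS : Continuous (Function.uncurry uS)) (hR : Continuous (Function.uncurry uR))
  (hM : RichMessages A Θ M)
include hS hR hM

lemma wHat_le_of_forall_expectedPayoff_le {κ : Experiment Θ M → Experiment M A}
    {b : Experiment Θ M → Experiment M Θ} (hb : ∀ ψ, IsPosterior (jointLaw μ0 ψ) (b ψ))
    (hκ : ∀ ψ, BestResponds uR (b ψ) (κ ψ)) {s : ℝ}
    (hs : ∀ ψ, expectedPayoff uS (jointLaw μ0 ψ) (κ ψ) ≤ s) : wHat uS uR μ0 ≤ s := by
  refine csSup_le (Set.Nonempty.image _ ⟨_, diracProba_mem_infoPolicies μ0⟩) ?_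
  rintro _ ⟨p, hp, rfl⟩
  obtain ⟨ψ, hψ⟩ := exists_experiment_integral_wFun_le hS hR hM hp
  exact (hψ _ _ (hb ψ) (hκ ψ)).trans (hs ψ)

lemma exists_experiment_vHat_le (μ0 : ProbabilityMeasure Θ) :
    ∃ ψ : Experiment Θ M, ∀ b : Experiment M Θ, IsPosterior (jointLaw μ0 ψ) b →
      vHat uS uR μ0 ≤ ∫ m, vFun uS uR (b.1 m) ∂(jointLaw μ0 ψ).snd := by
  obtain ⟨p, hp, h_max⟩ := exists_isMaxOn_integral_vFun hS hR μ0
  obtain ⟨ψ, hψ⟩ := exists_experiment_integral_vFun_le hS hR hM hp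
  refine ⟨ψ, fun b hb => csSup_le (Set.Nonempty.image _ ⟨p, hp⟩) ?_⟩
  rintro _ ⟨q, hq, rfl⟩
  exact (h_max hq).trans (hψ b hb)

-- After `ψ` the receiver mixes between the sender-best and the sender-worst best response so that
-- the payoff is exactly `s`; every other experiment is met with the sender-worst best response.
lemma exists_equilibrium_strategies {s : ℝ} (hs : s ∈ Set.Icc (wHat uS uR μ0) (vHat uS uR μ0)) :
    ∃ (ψ : Experiment Θ M) (κ : Experiment Θ M → Experiment M A)
      (b : Experiment Θ M → Experiment M Θ),
      (∀ ψ', IsPosterior (jointLaw μ0 ψ') (b ψ')) ∧ (∀ ψ', BestResponds uR (b ψ') (κ ψ')) ∧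
        (∀ ψ', expectedPayoff uS (jointLaw μ0 ψ') (κ ψ') ≤ s) ∧
          expectedPayoff uS (jointLaw μ0 ψ) (κ ψ) = s := by
  classical
  have := standardBorelSpace_of_compact_metrizable Θ
  have : Nonempty Θ := nonempty_of_isProbabilityMeasure (μ0 : Measure Θ)
  obtain ⟨ψ, hψ⟩ := exists_experiment_vHat_le hS hR hM μ0
  choose b hb using fun ψ' : Experiment Θ M => exists_isPosterior (jointLaw μ0 ψ')
  choose κw hκw hw using fun ψ' => (hb ψ').exists_expectedPayoff_eq_integral_wFun hS hR
  obtain ⟨κv, hκv, hv⟩ := (hb ψ).exists_expectedPayoff_eq_integral_vFun hS hR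
  have h_worst (ψ' : Experiment Θ M) : expectedPayoff uS (jointLaw μ0 ψ') (κw ψ') ≤ s :=
    (hw ψ').trans_le ((integral_wFun_posterior_le_wHat hS hR (hb ψ')).trans hs.1)
  have h_best : s ≤ expectedPayoff uS (jointLaw μ0 ψ) κv :=
    (hs.2.trans (hψ _ (hb ψ))).trans_eq hv.symm
  obtain ⟨t, ht⟩ := (hb ψ).exists_expectedPayoff_mixture_eq hS ⟨h_worst ψ, h_best⟩
  refine ⟨ψ, Function.update κw ψ (.mixture t κv (κw ψ)), b, hb, fun ψ' => ?_, fun ψ' => ?_, by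
    rwa [Function.update_self]⟩ <;> rcases eq_or_ne ψ' ψ with rfl | h_ne
  · rw [Function.update_self]
    exact hκv.mixture hR (hκw ψ') t
  · rw [Function.update_of_ne h_ne]
    exact hκw ψ'
  · rw [Function.update_self, ht]
  · rw [Function.update_of_ne h_ne]
    exact h_worst ψ'

end Equilibria

theorem equilibrium_payoff_set_eq_Icc_general
    {A Θ M : Type*}
    [TopologicalSpace A] [CompactSpace A] [TopologicalSpace.MetrizableSpace A] [Nonempty A]
    [MeasurableSpace A] [BorelSpace A]
    [TopologicalSpace Θ] [CompactSpace Θ] [TopologicalSpace.MetrizableSpace Θ]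
    [MeasurableSpace Θ] [BorelSpace Θ] [MeasurableSpace M]
    (uS uR : A → Θ → ℝ)
    (hS : Continuous fun p : A × Θ => uS p.1 p.2)
    (hR : Continuous fun p : A × Θ => uR p.1 p.2)
    (hM : RichMessages A Θ M)
    (μ0 : ProbabilityMeasure Θ) :
    {s : ℝ | ∃ (ψ : Experiment Θ M) (α : M → Experiment Θ M → ProbabilityMeasure A)
        (β : M → Experiment Θ M → ProbabilityMeasure Θ),
      IsEquilibrium uS uR μ0 ψ α β ∧ s = senderPayoff uS μ0 ψ α}
      = Set.Icc (wHat uS uR μ0) (vHat uS uR μ0) := by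
  ext s
  refine (exists_isEquilibrium_iff hS hR).trans ⟨?_, exists_equilibrium_strategies hS hR hM⟩
  rintro ⟨ψ, κ, b, hb, hκ, h_opt, h_eq⟩
  refine ⟨wHat_le_of_forall_expectedPayoff_le hS hR hM hb hκ h_opt, ?_⟩
  calc s = expectedPayoff uS (jointLaw μ0 ψ) (κ ψ) := h_eq.symm
    _ ≤ ∫ m, vFun uS uR ((b ψ).1 m) ∂(jointLaw μ0 ψ).snd :=
        (hb ψ).expectedPayoff_le_integral_vFun hS hR (hκ ψ)
    _ ≤ vHat uS uR μ0 := integral_vFun_posterior_le_vHat hS hR (hb ψ)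

/-- **Payoff set (Proposition 0).** The set of equilibrium sender payoffs equals the
closed interval `[ŵ(μ0), v̂(μ0)]`. -/
theorem equilibrium_payoff_set_eq_Icc
    {A Θ M : Type*}
    [TopologicalSpace A] [CompactSpace A] [TopologicalSpace.MetrizableSpace A] [Nonempty A]
    [MeasurableSpace A] [BorelSpace A]
    [TopologicalSpace Θ] [CompactSpace Θ] [TopologicalSpace.MetrizableSpace Θ] [Nonempty Θ]
    [MeasurableSpace Θ] [BorelSpace Θ]
    [TopologicalSpace M] [PolishSpace M] [MeasurableSpace M] [BorelSpace M]
    (uS uR : A → Θ → ℝ)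
    (hS : Continuous fun p : A × Θ => uS p.1 p.2)
    (hR : Continuous fun p : A × Θ => uR p.1 p.2)
    (hM : Uncountable M ∨ (Finite Θ ∧ ∃ f : Θ → M, Function.Injective f))
    (μ0 : ProbabilityMeasure Θ) :
    {s : ℝ | ∃ (ψ : Experiment Θ M) (α : M → Experiment Θ M → ProbabilityMeasure A)
        (β : M → Experiment Θ M → ProbabilityMeasure Θ),
      IsEquilibrium uS uR μ0 ψ α β ∧ s = senderPayoff uS μ0 ψ α}
      = Set.Icc (wHat uS uR μ0) (vHat uS uR μ0) := by
  have := standardBorelSpace_of_compact_metrizable A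
  exact equilibrium_payoff_set_eq_Icc_general uS uR hS hR (richMessages_of_polish hM) μ0
end

section
/- Let A and Θ be nonempty finite sets. There exists a set 𝒰_R ⊆ ℝ^{A×Θ} that is open, dense, and whose complement has Lebesgue measure zero, such that for every receiver utility u_R ∈ 𝒰_R, every prior μ0 ∈ ΔΘ, and every sender utility u_S ∈ ℝ^{A×Θ}, one has ŵ(μ0) = v̂(μ0), i.e., the sender has a unique equilibrium payoff. -/
open MeasureTheory

/-- The receiver's best responses `A*_R(μ)` to a belief vector `μ` on a finite state
space. -/
def BRf {A Θ : Type*} [Fintype Θ] (uR : A → Θ → ℝ) (μ : Θ → ℝ) : Set A :=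
  {a | ∀ a' : A, ∑ θ, uR a' θ * μ θ ≤ ∑ θ, uR a θ * μ θ}

/-- The belief simplex `ΔΘ` over a finite state space, viewed as a subspace of `ℝ^Θ`. -/
abbrev Belief (Θ : Type*) [Fintype Θ] : Type _ := {f : Θ → ℝ // f ∈ stdSimplex ℝ Θ}

/-- The sender's upper value function `v` (finite model, state-dependent sender
utility). -/
noncomputable def vF {A Θ : Type*} [Fintype Θ] (uS uR : A → Θ → ℝ) (μ : Θ → ℝ) : ℝ :=
  sSup ((fun a => ∑ θ, uS a θ * μ θ) '' BRf uR μ)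

/-- The sender's lower value function `w` (finite model, state-dependent sender
utility). -/
noncomputable def wF {A Θ : Type*} [Fintype Θ] (uS uR : A → Θ → ℝ) (μ : Θ → ℝ) : ℝ :=
  sInf ((fun a => ∑ θ, uS a θ * μ θ) '' BRf uR μ)

/-- The set `I(μ0)` of information policies: Borel probability measures on the belief
simplex whose barycenter is the prior `μ0`. -/
def IPolF {Θ : Type*} [Fintype Θ] (μ0 : Θ → ℝ) : Set (ProbabilityMeasure (Belief Θ)) :=
  {p | ∀ θ : Θ, ∫ μ, (μ : Belief Θ).1 θ ∂(p : Measure (Belief Θ)) = μ0 θ}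

/-- `v̂(μ0)`: the sender's best equilibrium (Bayesian persuasion) value (finite model). -/
noncomputable def vHatF {A Θ : Type*} [Fintype Θ] (uS uR : A → Θ → ℝ) (μ0 : Θ → ℝ) : ℝ :=
  sSup ((fun p : ProbabilityMeasure (Belief Θ) =>
    ∫ μ, vF uS uR (μ : Belief Θ).1 ∂(p : Measure (Belief Θ))) '' IPolF μ0)

/-- `ŵ(μ0)`: the sender's worst equilibrium value (finite model). -/
noncomputable def wHatF {A Θ : Type*} [Fintype Θ] (uS uR : A → Θ → ℝ) (μ0 : Θ → ℝ) : ℝ :=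
  sSup ((fun p : ProbabilityMeasure (Belief Θ) =>
    ∫ μ, wF uS uR (μ : Belief Θ).1 ∂(p : Measure (Belief Θ))) '' IPolF μ0)

/-!
`ŵ` is concave on the simplex of beliefs. Any concave majorant `f` of `v` bounds `v̂`: the pair
`(μ, ∫ v dp)` is a barycenter of the graph of `v`, which is covered by the finitely many compact
convex sets `{(ν, ∑_θ u_S(a,θ) ν(θ)) | a ∈ A*_R(ν)}`, `a ∈ A`. The convex hull of their union is
compact, so it contains this barycenter, and it lies below `f`. So it is enough that `v ≤ ŵ`.

Call a receiver utility generic if each action that is optimal somewhere on a face of the simplex is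
uniquely optimal somewhere on the same face. For generic utilities, let `a` attain `v(μ)` and let
`κ`, with support in that of `μ`, be a belief to which `a` is the unique best response. On the
half-open segment from `κ` to `μ`, without `μ`, the action `a` stays uniquely optimal, so its payoff
is `w ≤ ŵ`. The segment extends beyond `μ` within the simplex, so the concave `ŵ` is continuous
along it at `μ`, and the inequality passes to the limit: `v(μ) ≤ ŵ(μ)`.

Raising the payoff of `a` in all states by the same positive amount makes it strictly optimal
wherever it was optimal. So genericity fails, for a given face and action, on a closed set that
meets every line in a fixed direction at most once; such a set is null.
-/

open Function Set
open scoped Matrix Pointwise Topology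

theorem isCompact_convexHull_union {E : Type*} [AddCommGroup E] [Module ℝ E] [TopologicalSpace E]
    [IsTopologicalAddGroup E] [ContinuousSMul ℝ E] {s t : Set E} (hs : IsCompact (convexHull ℝ s))
    (ht : IsCompact (convexHull ℝ t)) : IsCompact (convexHull ℝ (s ∪ t)) := by
  rcases s.eq_empty_or_nonempty with rfl | hs₀
  · rwa [empty_union]
  rcases t.eq_empty_or_nonempty with rfl | ht₀
  · rwa [union_empty]
  have himage : convexHull ℝ (s ∪ t) = (fun x : ℝ × E × E => AffineMap.lineMap x.2.1 x.2.2 x.1) ''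
      (Icc 0 1 ×ˢ convexHull ℝ s ×ˢ convexHull ℝ t) := by
    ext x
    simp only [convexHull_union hs₀ ht₀, mem_convexJoin, segment_eq_image_lineMap, mem_image,
      mem_prod, Prod.exists]
    exact ⟨fun ⟨y, hy, z, hz, r, hr, hx⟩ => ⟨r, y, z, ⟨hr, hy, hz⟩, hx⟩,
      fun ⟨r, y, z, ⟨hr, hy, hz⟩, hx⟩ => ⟨y, hy, z, hz, r, hr, hx⟩⟩
  rw [himage]
  refine (isCompact_Icc.prod (hs.prod ht)).image ?_
  simp only [AffineMap.lineMap_apply_module]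
  fun_prop

theorem isCompact_convexHull_iUnion {E ι : Type*} [AddCommGroup E] [Module ℝ E]
    [TopologicalSpace E] [IsTopologicalAddGroup E] [ContinuousSMul ℝ E] [Finite ι] {C : ι → Set E}
    (hC : ∀ i, IsCompact (convexHull ℝ (C i))) : IsCompact (convexHull ℝ (⋃ i, C i)) := by
  rw [← biUnion_univ]
  induction univ, finite_univ (α := ι) using Set.Finite.induction_on with
  | empty => simp
  | insert _ _ ih =>
    rw [biUnion_insert]
    exact isCompact_convexHull_union (hC _) ih

theorem addHaar_eq_zero_of_forall_add_smul_notMem {E : Type*} [NormedAddCommGroup E]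
    [NormedSpace ℝ E] [FiniteDimensional ℝ E] [MeasurableSpace E] [BorelSpace E] (μ : Measure E)
    [μ.IsAddHaarMeasure] {s : Set E} (hs : MeasurableSet s) (e : E)
    (h : ∀ x ∈ s, ∀ t : ℝ, 0 < t → x + t • e ∉ s) : μ s = 0 := by
  refine Measure.addHaar_eq_zero_of_disjoint_translates μ
    (fun n : ℕ => (1 / ((n : ℝ) + 1)) • e) ?_ ((pairwise_disjoint_on _).2 fun i j hij => ?_) hs
  · exact Metric.isBounded_range_of_tendsto _
      (tendsto_one_div_add_atTop_nhds_zero_nat.smul_const e)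
  · simp only [singleton_add]
    rw [disjoint_left]
    rintro _ ⟨x, hx, rfl⟩ ⟨y, hy, hxy⟩
    refine h x hx (1 / ((i : ℝ) + 1) - 1 / ((j : ℝ) + 1))
      (sub_pos.2 (Nat.one_div_lt_one_div hij)) ?_
    convert hy using 1
    rw [sub_smul, ← add_sub_assoc, add_comm, sub_eq_iff_eq_add, add_comm y]
    exact hxy.symm

theorem isClosed_setOf_exists_mem {X Y : Type*} [TopologicalSpace X] [TopologicalSpace Y]
    {K : Set Y} (hK : IsCompact K) {C : Set (X × Y)} (hC : IsClosed C) :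
    IsClosed {x | ∃ y ∈ K, (x, y) ∈ C} := by
  rw [← isOpen_compl_iff, isOpen_iff_eventually]
  intro x hx
  have hx' : ∀ y ∈ K, (x, y) ∉ C := by simpa using hx
  filter_upwards [hK.eventually_forall_of_forall_eventually (x₀ := x) (P := fun x y => (x, y) ∉ C)
    fun y hy => nhds_prod_eq (x := x) (y := y) ▸ hC.isOpen_compl.mem_nhds (hx' y hy)] with z hz
  simpa using hz

theorem continuousAt_comp_lineMap_of_concaveOn {E : Type*} [AddCommGroup E] [Module ℝ E]
    {s : Set E} {f : E → ℝ} (hf : ConcaveOn ℝ s f) {x y : E}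
    (h : ∀ᶠ t in 𝓝 (0 : ℝ), AffineMap.lineMap x y t ∈ s) :
    ContinuousAt (fun t : ℝ => f (AffineMap.lineMap x y t)) 0 :=
  (hf.comp_affineMap (AffineMap.lineMap x y)).continuousOn_interior.continuousAt
    (isOpen_interior.mem_nhds (mem_interior_iff_mem_nhds.2 h))

theorem continuous_curry_pi {α β γ : Type*} [TopologicalSpace γ] :
    Continuous (curry : (α × β → γ) → α → β → γ) :=
  continuous_pi fun a => continuous_pi fun b => continuous_apply (a, b)

section

variable {A Θ : Type*} [Fintype Θ] {S : Set Θ} {a : A} {u uS uR : A → Θ → ℝ} {μ ν κ : Θ → ℝ}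

/-! ### Beliefs -/

theorem eventually_lineMap_mem_stdSimplex (hμ : μ ∈ stdSimplex ℝ Θ) (hκ : κ ∈ stdSimplex ℝ Θ)
    (h : support κ ⊆ support μ) :
    ∀ᶠ t in 𝓝 (0 : ℝ), AffineMap.lineMap μ κ t ∈ stdSimplex ℝ Θ := by
  have hsum (t : ℝ) : ∑ θ, AffineMap.lineMap μ κ t θ = 1 := by
    simp [AffineMap.lineMap_apply_module, Finset.sum_add_distrib, ← Finset.mul_sum, hμ.2, hκ.2]
  have hnonneg (θ : Θ) : ∀ᶠ t in 𝓝 (0 : ℝ), 0 ≤ AffineMap.lineMap μ κ t θ := by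
    rcases (hμ.1 θ).eq_or_lt with hθ | hθ
    · have hκθ : κ θ = 0 := notMem_support.1 fun hθ' => h hθ' hθ.symm
      simp [AffineMap.lineMap_apply_module, ← hθ, hκθ]
    · have hcont : ContinuousAt (fun t : ℝ => AffineMap.lineMap μ κ t θ) 0 := by
        simp only [AffineMap.lineMap_apply_module, Pi.add_apply, Pi.smul_apply]
        fun_prop
      exact (hcont.eventually_const_lt (by simpa using hθ)).mono fun t => le_of_lt
  exact (Filter.eventually_all.2 hnonneg).mono fun t ht => ⟨ht, hsum t⟩

theorem abs_dotProduct_le_norm_of_mem_stdSimplex (hμ : μ ∈ stdSimplex ℝ Θ) (x : Θ → ℝ) :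
    |x ⬝ᵥ μ| ≤ ‖x‖ :=
  calc |x ⬝ᵥ μ| ≤ ∑ θ, |x θ * μ θ| := Finset.abs_sum_le_sum_abs _ _
    _ ≤ ∑ θ, ‖x‖ * μ θ := Finset.sum_le_sum fun θ _ => by
        rw [abs_mul, abs_of_nonneg (hμ.1 θ)]
        exact mul_le_mul_of_nonneg_right (norm_le_pi_norm x θ) (hμ.1 θ)
    _ = ‖x‖ := by rw [← Finset.mul_sum, hμ.2, mul_one]

theorem continuous_belief_apply (θ : Θ) : Continuous fun x : Belief Θ => x.1 θ :=
  (continuous_apply θ).comp continuous_subtype_val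

theorem integrable_of_continuous_belief {E : Type*} [NormedAddCommGroup E]
    {p : Measure (Belief Θ)} [IsFiniteMeasure p] {f : Belief Θ → E} (hf : Continuous f) :
    Integrable f p :=
  have : CompactSpace (Belief Θ) := isCompact_iff_compactSpace.1 (isCompact_stdSimplex ℝ Θ)
  hf.integrable_of_hasCompactSupport (.of_compactSpace f)

/-- The face of the simplex of beliefs spanned by the states in `S`. -/
def simplexFace (S : Set Θ) : Set (Θ → ℝ) :=
  {μ ∈ stdSimplex ℝ Θ | support μ ⊆ S}

theorem isCompact_simplexFace (S : Set Θ) : IsCompact (simplexFace S) := by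
  refine (isCompact_stdSimplex ℝ Θ).inter_right ?_
  change IsClosed {μ : Θ → ℝ | support μ ⊆ S}
  simp only [support_subset_iff', ofPred_forall]
  exact isClosed_biInter fun θ _ => isClosed_eq (continuous_apply θ) continuous_const

/-! ### Best responses -/

theorem mem_BRf : a ∈ BRf u μ ↔ ∀ a', u a' ⬝ᵥ μ ≤ u a ⬝ᵥ μ := Iff.rfl

theorem BRf_nonempty [Finite A] [Nonempty A] (u : A → Θ → ℝ) (μ : Θ → ℝ) : (BRf u μ).Nonempty :=
  Finite.exists_max fun a => u a ⬝ᵥ μ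

theorem isClosed_setOf_mem_BRf (a : A) :
    IsClosed {x : (A → Θ → ℝ) × (Θ → ℝ) | a ∈ BRf x.1 x.2} := by
  simp only [mem_BRf, ofPred_forall]
  exact isClosed_iInter fun a' => isClosed_le (by fun_prop) (by fun_prop)

theorem convex_setOf_mem_BRf (u : A → Θ → ℝ) (a : A) : Convex ℝ {μ | a ∈ BRf u μ} := by
  intro μ hμ ν hν s t hs ht _ a'
  change u a' ⬝ᵥ (s • μ + t • ν) ≤ u a ⬝ᵥ (s • μ + t • ν)
  simp only [dotProduct_add, dotProduct_smul, smul_eq_mul]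
  exact add_le_add (mul_le_mul_of_nonneg_left (hμ a') hs) (mul_le_mul_of_nonneg_left (hν a') ht)

/-- `a` is the receiver's only best response to the belief `μ`. -/
def IsStrictBR (u : A → Θ → ℝ) (μ : Θ → ℝ) (a : A) : Prop :=
  ∀ a' ≠ a, u a' ⬝ᵥ μ < u a ⬝ᵥ μ

theorem isOpen_setOf_isStrictBR [Finite A] (μ : Θ → ℝ) (a : A) :
    IsOpen {u : A → Θ → ℝ | IsStrictBR u μ a} := by
  simp only [IsStrictBR, ofPred_forall]
  exact isOpen_iInter_of_finite fun a' => isOpen_iInter_of_finite fun _ =>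
    isOpen_lt (by fun_prop) (by fun_prop)

theorem IsStrictBR.BRf_eq_singleton (h : IsStrictBR u μ a) : BRf u μ = {a} := by
  ext b
  refine ⟨fun hb => by_contra fun hba => (h b hba).not_ge (hb a), ?_⟩
  rintro rfl a'
  rcases eq_or_ne a' b with rfl | ha'
  exacts [le_rfl, (h a' ha').le]

theorem IsStrictBR.lineMap (hκ : IsStrictBR u κ a) (hμ : a ∈ BRf u μ) {t : ℝ} (ht : 0 < t)
    (ht' : t ≤ 1) : IsStrictBR u (AffineMap.lineMap μ κ t) a := by
  intro a' ha'
  simp only [AffineMap.lineMap_apply_module, dotProduct_add, dotProduct_smul, smul_eq_mul]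
  exact add_lt_add_of_le_of_lt (mul_le_mul_of_nonneg_left (hμ a') (sub_nonneg.2 ht'))
    (mul_lt_mul_of_pos_left (hκ a' ha') ht)

theorem isStrictBR_add_smul_single [DecidableEq A] (hμ : μ ∈ stdSimplex ℝ Θ) (ha : a ∈ BRf u μ)
    {t : ℝ} (ht : 0 < t) : IsStrictBR (u + t • (Pi.single a 1 : A → Θ → ℝ)) μ a := by
  intro a' ha'
  have hle : u a' ⬝ᵥ μ ≤ u a ⬝ᵥ μ := ha a'
  have hone : (1 : Θ → ℝ) ⬝ᵥ μ = 1 := (one_dotProduct μ).trans hμ.2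
  simp only [Pi.add_apply, Pi.smul_apply, Pi.single_eq_same, Pi.single_eq_of_ne ha', smul_zero,
    add_zero, add_dotProduct, smul_dotProduct, hone, smul_eq_mul, mul_one]
  linarith

/-! ### Generic receiver utilities -/

/-- A receiver utility is generic if an action that is a best response somewhere on a face of the
simplex is the only best response somewhere on that face. -/
def IsGeneric (u : A → Θ → ℝ) : Prop :=
  ∀ S : Set Θ, ∀ μ ∈ simplexFace S, ∀ a ∈ BRf u μ, ∃ κ ∈ simplexFace S, IsStrictBR u κ a

/-- The receiver utilities at which genericity fails for the action `a` on the face spanned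
by `S`. -/
def nongenericUtilities (S : Set Θ) (a : A) : Set (A → Θ → ℝ) :=
  {u | (∃ μ ∈ simplexFace S, a ∈ BRf u μ) ∧ ∀ κ ∈ simplexFace S, ¬IsStrictBR u κ a}

theorem compl_setOf_isGeneric :
    {u : A → Θ → ℝ | IsGeneric u}ᶜ = ⋃ S : Set Θ, ⋃ a, nongenericUtilities S a := by
  ext u
  simp only [IsGeneric, nongenericUtilities, mem_compl_iff, mem_ofPred_eq, mem_iUnion]
  push Not
  exact exists_congr fun S => ⟨fun ⟨μ, hμ, a, ha, h⟩ => ⟨a, ⟨μ, hμ, ha⟩, h⟩,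
    fun ⟨a, ⟨μ, hμ, ha⟩, h⟩ => ⟨μ, hμ, a, ha, h⟩⟩

theorem isClosed_nongenericUtilities [Finite A] (S : Set Θ) (a : A) :
    IsClosed (nongenericUtilities S a) := by
  refine (isClosed_setOf_exists_mem (isCompact_simplexFace S) (isClosed_setOf_mem_BRf a)).inter ?_
  change IsClosed {u | ∀ κ ∈ simplexFace S, ¬IsStrictBR u κ a}
  simp only [ofPred_forall]
  exact isClosed_biInter fun κ _ => (isOpen_setOf_isStrictBR κ a).isClosed_compl

theorem add_smul_single_notMem_nongenericUtilities [DecidableEq A]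
    (hu : u ∈ nongenericUtilities S a) {t : ℝ} (ht : 0 < t) :
    u + t • (Pi.single a 1 : A → Θ → ℝ) ∉ nongenericUtilities S a := by
  obtain ⟨⟨μ, hμ, ha⟩, -⟩ := hu
  exact fun h => h.2 μ hμ (isStrictBR_add_smul_single hμ.1 ha ht)

theorem isOpen_setOf_isGeneric [Finite A] : IsOpen {u : A → Θ → ℝ | IsGeneric u} := by
  rw [← isClosed_compl_iff, compl_setOf_isGeneric]
  exact isClosed_iUnion_of_finite fun S => isClosed_iUnion_of_finite fun a =>
    isClosed_nongenericUtilities S a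

theorem ae_isGeneric_curry [Fintype A] : ∀ᵐ u : A × Θ → ℝ, IsGeneric (curry u) := by
  classical
  have hnull (S : Set Θ) (a : A) : volume (curry ⁻¹' nongenericUtilities S a) = 0 :=
    addHaar_eq_zero_of_forall_add_smul_notMem volume
      ((isClosed_nongenericUtilities S a).preimage continuous_curry_pi).measurableSet
      (uncurry (Pi.single a 1)) fun u hu t ht => add_smul_single_notMem_nongenericUtilities hu ht
  change volume (curry ⁻¹' {u : A → Θ → ℝ | IsGeneric u}ᶜ) = 0
  rw [compl_setOf_isGeneric]
  simp only [preimage_iUnion]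
  exact measure_iUnion_null fun S => measure_iUnion_null fun a => hnull S a

/-! ### The sender's value functions -/

theorem wF_eq_neg_vF_neg (uS uR : A → Θ → ℝ) (μ : Θ → ℝ) : wF uS uR μ = -vF (-uS) uR μ := by
  simp [wF, vF, Real.sInf_def, ← image_neg_eq_neg, image_image]

theorem IsStrictBR.wF_eq (h : IsStrictBR uR μ a) : wF uS uR μ = uS a ⬝ᵥ μ := by
  simp [wF, h.BRf_eq_singleton, dotProduct]

theorem dotProduct_le_vF [Finite A] (uS : A → Θ → ℝ) (ha : a ∈ BRf uR μ) :
    uS a ⬝ᵥ μ ≤ vF uS uR μ :=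
  le_csSup (toFinite _).bddAbove (mem_image_of_mem _ ha)

theorem wF_le_vF [Finite A] (uS uR : A → Θ → ℝ) (μ : Θ → ℝ) : wF uS uR μ ≤ vF uS uR μ :=
  Real.sInf_le_sSup _ (toFinite _).bddBelow (toFinite _).bddAbove

section

variable [Finite A] [Nonempty A]

theorem exists_mem_BRf_dotProduct_eq_vF (uS uR : A → Θ → ℝ) (μ : Θ → ℝ) :
    ∃ a ∈ BRf uR μ, uS a ⬝ᵥ μ = vF uS uR μ :=
  ((BRf_nonempty uR μ).image _).csSup_mem (toFinite _)

theorem upperSemicontinuous_vF (uS uR : A → Θ → ℝ) : UpperSemicontinuous (vF uS uR) := by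
  refine upperSemicontinuous_iff_isClosed_preimage.2 fun c => ?_
  have heq : vF uS uR ⁻¹' Ici c = ⋃ a, {μ | a ∈ BRf uR μ} ∩ {μ | c ≤ uS a ⬝ᵥ μ} := by
    ext μ
    simp only [mem_preimage, mem_Ici, mem_iUnion, mem_inter_iff, mem_ofPred_eq]
    refine ⟨fun h => ?_, fun ⟨a, ha, h⟩ => h.trans (dotProduct_le_vF uS ha)⟩
    obtain ⟨a, ha, hv⟩ := exists_mem_BRf_dotProduct_eq_vF uS uR μ
    exact ⟨a, ha, hv ▸ h⟩
  rw [heq]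
  exact isClosed_iUnion_of_finite fun a =>
    ((isClosed_setOf_mem_BRf a).preimage (by fun_prop : Continuous fun μ => (uR, μ))).inter
      (isClosed_le (by fun_prop) (by fun_prop))

theorem measurable_vF (uS uR : A → Θ → ℝ) : Measurable (vF uS uR) :=
  (upperSemicontinuous_vF uS uR).measurable

theorem measurable_wF (uS uR : A → Θ → ℝ) : Measurable (wF uS uR) := by
  rw [show wF uS uR = -vF (-uS) uR from funext (wF_eq_neg_vF_neg uS uR)]
  exact (measurable_vF (-uS) uR).neg

end

section

variable [Fintype A] [Nonempty A]

theorem abs_vF_le_norm (uS uR : A → Θ → ℝ) (hμ : μ ∈ stdSimplex ℝ Θ) : |vF uS uR μ| ≤ ‖uS‖ := by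
  obtain ⟨a, -, ha⟩ := exists_mem_BRf_dotProduct_eq_vF uS uR μ
  rw [← ha]
  exact (abs_dotProduct_le_norm_of_mem_stdSimplex hμ _).trans (norm_le_pi_norm uS a)

theorem abs_wF_le_norm (uS uR : A → Θ → ℝ) (hμ : μ ∈ stdSimplex ℝ Θ) : |wF uS uR μ| ≤ ‖uS‖ := by
  rw [wF_eq_neg_vF_neg, abs_neg, ← norm_neg]
  exact abs_vF_le_norm (-uS) uR hμ

end

/-! ### Concavification -/

/-- The supremum of the expectations of `f` under the information policies with prior `μ`. It is
`v̂` when `f` is `v`, and `ŵ` when `f` is `w`. Being a real supremum, it is meaningful for `μ` in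
the simplex and `f` bounded there. -/
noncomputable def concavification (f : (Θ → ℝ) → ℝ) (μ : Θ → ℝ) : ℝ :=
  sSup ((fun p : ProbabilityMeasure (Belief Θ) => ∫ ν, f ν.1 ∂(p : Measure (Belief Θ))) '' IPolF μ)

theorem exists_dirac_mem_IPolF (hμ : μ ∈ stdSimplex ℝ Θ) :
    ∃ p ∈ IPolF μ, (p : Measure (Belief Θ)) = Measure.dirac ⟨μ, hμ⟩ :=
  ⟨⟨Measure.dirac ⟨μ, hμ⟩, inferInstance⟩, fun _ => integral_dirac _ _, rfl⟩

theorem integral_eq_of_mem_IPolF {p : ProbabilityMeasure (Belief Θ)} (hp : p ∈ IPolF μ) :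
    ∫ ν, ν.1 ∂(p : Measure (Belief Θ)) = μ := by
  ext θ
  rw [eval_integral fun θ => integrable_of_continuous_belief (continuous_belief_apply θ)]
  exact hp θ

theorem exists_mixture_mem_IPolF {p q : ProbabilityMeasure (Belief Θ)} (hp : p ∈ IPolF μ)
    (hq : q ∈ IPolF ν) {s t : ℝ} (hs : 0 ≤ s) (ht : 0 ≤ t) (hst : s + t = 1) :
    ∃ r ∈ IPolF (s • μ + t • ν), ∀ f : Belief Θ → ℝ, Integrable f (p : Measure (Belief Θ)) →
      Integrable f (q : Measure (Belief Θ)) →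
      ∫ x, f x ∂(r : Measure (Belief Θ)) =
        s * ∫ x, f x ∂(p : Measure (Belief Θ)) + t * ∫ x, f x ∂(q : Measure (Belief Θ)) := by
  let r : Measure (Belief Θ) := ENNReal.ofReal s • (p : Measure (Belief Θ)) +
    ENNReal.ofReal t • (q : Measure (Belief Θ))
  have hr : IsProbabilityMeasure r := ⟨by simp [r, ← ENNReal.ofReal_add hs ht, hst]⟩
  have hint (f : Belief Θ → ℝ) (hfp : Integrable f (p : Measure (Belief Θ)))
      (hfq : Integrable f (q : Measure (Belief Θ))) :
      ∫ x, f x ∂r = s * ∫ x, f x ∂(p : Measure (Belief Θ)) +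
        t * ∫ x, f x ∂(q : Measure (Belief Θ)) := by
    rw [integral_add_measure (hfp.smul_measure ENNReal.ofReal_ne_top)
      (hfq.smul_measure ENNReal.ofReal_ne_top)]
    simp only [integral_smul_measure, ENNReal.toReal_ofReal, hs, ht, smul_eq_mul]
  refine ⟨⟨r, hr⟩, fun θ => ?_, hint⟩
  have hcont := continuous_belief_apply θ
  rw [ProbabilityMeasure.coe_mk, hint _ (integrable_of_continuous_belief hcont)
    (integrable_of_continuous_belief hcont), hp θ, hq θ]
  rfl

section

variable {f g : (Θ → ℝ) → ℝ} {M : ℝ}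

theorem integrable_belief_of_bounded {p : Measure (Belief Θ)} [IsFiniteMeasure p]
    (hf : Measurable f) (hM : ∀ μ ∈ stdSimplex ℝ Θ, |f μ| ≤ M) :
    Integrable (fun x : Belief Θ => f x.1) p :=
  .of_bound (hf.comp measurable_subtype_coe).aestronglyMeasurable M
    (.of_forall fun x => hM x.1 x.2)

theorem isLUB_concavification (hM : ∀ μ ∈ stdSimplex ℝ Θ, |f μ| ≤ M) (hμ : μ ∈ stdSimplex ℝ Θ) :
    IsLUB ((fun p : ProbabilityMeasure (Belief Θ) =>
      ∫ ν, f ν.1 ∂(p : Measure (Belief Θ))) '' IPolF μ) (concavification f μ) := by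
  obtain ⟨p₀, hp₀, -⟩ := exists_dirac_mem_IPolF hμ
  refine isLUB_csSup ((nonempty_of_mem hp₀).image _)
    ⟨M, forall_mem_image.2 fun p _ => (le_abs_self _).trans ?_⟩
  simpa using norm_integral_le_of_norm_le_const (μ := (p : Measure (Belief Θ)))
    (f := fun x : Belief Θ => f x.1) (C := M) (.of_forall fun x => hM x.1 x.2)

theorem le_concavification (hM : ∀ μ ∈ stdSimplex ℝ Θ, |f μ| ≤ M) (hμ : μ ∈ stdSimplex ℝ Θ) :
    f μ ≤ concavification f μ := by
  obtain ⟨p, hp, hdirac⟩ := exists_dirac_mem_IPolF hμ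
  simpa [hdirac] using (isLUB_concavification hM hμ).1 (mem_image_of_mem _ hp)

theorem concavification_mono (hf : Measurable f) (hM : ∀ μ ∈ stdSimplex ℝ Θ, |f μ| ≤ M)
    (hg : Measurable g) {N : ℝ} (hN : ∀ μ ∈ stdSimplex ℝ Θ, |g μ| ≤ N)
    (hfg : ∀ μ ∈ stdSimplex ℝ Θ, f μ ≤ g μ) (hμ : μ ∈ stdSimplex ℝ Θ) :
    concavification f μ ≤ concavification g μ :=
  (isLUB_concavification hM hμ).2 <| forall_mem_image.2 fun _ hp =>
    (integral_mono (integrable_belief_of_bounded hf hM) (integrable_belief_of_bounded hg hN)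
      fun x => hfg x.1 x.2).trans ((isLUB_concavification hN hμ).1 (mem_image_of_mem _ hp))

theorem concaveOn_concavification (hf : Measurable f) (hM : ∀ μ ∈ stdSimplex ℝ Θ, |f μ| ≤ M) :
    ConcaveOn ℝ (stdSimplex ℝ Θ) (concavification f) := by
  have hconv := convex_stdSimplex ℝ Θ
  refine ⟨hconv, fun μ hμ ν hν s t hs ht hst => ?_⟩
  refine (((isLUB_concavification hM hμ).mul_left hs).add
    ((isLUB_concavification hM hν).mul_left ht)).2 ?_
  rintro _ ⟨_, ⟨_, ⟨p, hp, rfl⟩, rfl⟩, _, ⟨_, ⟨q, hq, rfl⟩, rfl⟩, rfl⟩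
  obtain ⟨r, hr, hint⟩ := exists_mixture_mem_IPolF hp hq hs ht hst
  exact (hint _ (integrable_belief_of_bounded hf hM)
    (integrable_belief_of_bounded hf hM)).symm.trans_le
      ((isLUB_concavification hM (hconv hμ hν hs ht hst)).1 (mem_image_of_mem _ hr))

end

theorem isCompact_convexHull_graph_BRf (uS uR : A → Θ → ℝ) (a : A) :
    IsCompact (convexHull ℝ
      ((fun μ => (μ, uS a ⬝ᵥ μ)) '' (stdSimplex ℝ Θ ∩ {μ | a ∈ BRf uR μ}))) := by
  have hcompact : IsCompact (stdSimplex ℝ Θ ∩ {μ | a ∈ BRf uR μ}) :=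
    (isCompact_stdSimplex ℝ Θ).inter_right
      ((isClosed_setOf_mem_BRf a).preimage (by fun_prop : Continuous fun μ => (uR, μ)))
  have hconv : Convex ℝ (stdSimplex ℝ Θ ∩ {μ | a ∈ BRf uR μ}) :=
    (convex_stdSimplex ℝ Θ).inter (convex_setOf_mem_BRf uR a)
  rw [(hconv.is_linear_image ⟨by simp [dotProduct_add], by simp [dotProduct_smul]⟩).convexHull_eq]
  exact hcompact.image (by fun_prop)

theorem concavification_vF_le_of_concaveOn [Finite A] [Nonempty A] {f : (Θ → ℝ) → ℝ}
    (hf : ConcaveOn ℝ (stdSimplex ℝ Θ) f) (hvf : ∀ μ ∈ stdSimplex ℝ Θ, vF uS uR μ ≤ f μ)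
    (hμ : μ ∈ stdSimplex ℝ Θ) : concavification (vF uS uR) μ ≤ f μ := by
  cases nonempty_fintype A
  refine (isLUB_concavification (fun _ => abs_vF_le_norm uS uR) hμ).2
    (forall_mem_image.2 fun p hp => ?_)
  set P := convexHull ℝ (⋃ a, (fun μ => (μ, uS a ⬝ᵥ μ)) '' (stdSimplex ℝ Θ ∩ {μ | a ∈ BRf uR μ}))
  have hP_le : P ⊆ {x | x.1 ∈ stdSimplex ℝ Θ ∧ x.2 ≤ f x.1} := by
    refine convexHull_min (iUnion_subset fun a => ?_) hf.convex_hypograph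
    rintro _ ⟨ν, ⟨hν, ha⟩, rfl⟩
    exact ⟨hν, (dotProduct_le_vF uS ha).trans (hvf ν hν)⟩
  have hP_closed : IsClosed P :=
    (isCompact_convexHull_iUnion (isCompact_convexHull_graph_BRf uS uR)).isClosed
  have hgraph (x : Belief Θ) : (x.1, vF uS uR x.1) ∈ P := by
    obtain ⟨a, ha, hv⟩ := exists_mem_BRf_dotProduct_eq_vF uS uR x.1
    exact subset_convexHull ℝ _ (mem_iUnion.2 ⟨a, x.1, ⟨x.2, ha⟩, Prod.ext rfl hv⟩)
  have hid : Integrable (fun x : Belief Θ => x.1) (p : Measure (Belief Θ)) :=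
    integrable_of_continuous_belief continuous_subtype_val
  have hv : Integrable (fun x : Belief Θ => vF uS uR x.1) (p : Measure (Belief Θ)) :=
    integrable_belief_of_bounded (measurable_vF uS uR) fun _ => abs_vF_le_norm uS uR
  have hmem := (convex_convexHull ℝ _).integral_mem hP_closed (.of_forall hgraph) (hid.prodMk hv)
  rw [integral_pair hid hv, integral_eq_of_mem_IPolF hp] at hmem
  exact (hP_le hmem).2

/-! ### Uniqueness of the equilibrium payoff -/

theorem IsGeneric.vF_le_concavification_wF [Finite A] [Nonempty A] (hu : IsGeneric uR)
    (uS : A → Θ → ℝ) (hμ : μ ∈ stdSimplex ℝ Θ) :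
    vF uS uR μ ≤ concavification (wF uS uR) μ := by
  cases nonempty_fintype A
  obtain ⟨a, ha, hv⟩ := exists_mem_BRf_dotProduct_eq_vF uS uR μ
  obtain ⟨κ, ⟨hκ, hκμ⟩, hstrict⟩ := hu (support μ) μ ⟨hμ, subset_rfl⟩ a ha
  have hbound : ∀ ν ∈ stdSimplex ℝ Θ, |wF uS uR ν| ≤ ‖uS‖ := fun _ => abs_wF_le_norm uS uR
  have hline := eventually_lineMap_mem_stdSimplex hμ hκ hκμ
  have hcont := continuousAt_comp_lineMap_of_concaveOn
    (concaveOn_concavification (measurable_wF uS uR) hbound) hline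
  have hlim : Filter.Tendsto (fun t : ℝ => uS a ⬝ᵥ AffineMap.lineMap μ κ t) (𝓝[>] 0)
      (𝓝 (vF uS uR μ)) := by
    have : Continuous fun t : ℝ => uS a ⬝ᵥ AffineMap.lineMap μ κ t := by
      simp only [AffineMap.lineMap_apply_module]
      fun_prop
    simpa [hv] using (this.tendsto 0).mono_left nhdsWithin_le_nhds
  have hle : ∀ᶠ t : ℝ in 𝓝[>] 0, uS a ⬝ᵥ AffineMap.lineMap μ κ t ≤
      concavification (wF uS uR) (AffineMap.lineMap μ κ t) := by
    filter_upwards [nhdsWithin_le_nhds hline, Ioc_mem_nhdsGT one_pos] with t ht ht01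
    rw [← (hstrict.lineMap ha ht01.1 ht01.2).wF_eq]
    exact le_concavification hbound ht
  simpa using le_of_tendsto_of_tendsto hlim (hcont.tendsto.mono_left nhdsWithin_le_nhds) hle

theorem IsGeneric.wHatF_eq_vHatF [Finite A] [Nonempty A] (hu : IsGeneric uR) (uS : A → Θ → ℝ)
    (hμ : μ ∈ stdSimplex ℝ Θ) : wHatF uS uR μ = vHatF uS uR μ := by
  cases nonempty_fintype A
  have hv : ∀ ν ∈ stdSimplex ℝ Θ, |vF uS uR ν| ≤ ‖uS‖ := fun _ => abs_vF_le_norm uS uR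
  have hw : ∀ ν ∈ stdSimplex ℝ Θ, |wF uS uR ν| ≤ ‖uS‖ := fun _ => abs_wF_le_norm uS uR
  refine le_antisymm ?_ ?_
  · exact concavification_mono (measurable_wF uS uR) hw (measurable_vF uS uR) hv
      (fun ν _ => wF_le_vF uS uR ν) hμ
  · exact concavification_vF_le_of_concaveOn (concaveOn_concavification (measurable_wF uS uR) hw)
      (fun _ => hu.vF_le_concavification_wF uS) hμ

end

/-- **Generic uniqueness.** For finite action and state spaces, there is an open dense
full-Lebesgue-measure set of receiver utilities such that, for every prior and every
sender utility, the sender has a unique equilibrium payoff. -/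
theorem generic_unique_payoff
    (A Θ : Type) [Fintype A] [Fintype Θ] [Nonempty A] [Nonempty Θ] :
    ∃ UR : Set (A × Θ → ℝ), IsOpen UR ∧ Dense UR ∧ volume URᶜ = 0 ∧
      ∀ uR ∈ UR, ∀ μ0 ∈ stdSimplex ℝ Θ, ∀ uS : A × Θ → ℝ,
        wHatF (fun a θ => uS (a, θ)) (fun a θ => uR (a, θ)) μ0 =
          vHatF (fun a θ => uS (a, θ)) (fun a θ => uR (a, θ)) μ0 := by
  exact ⟨{u | IsGeneric (curry u)}, isOpen_setOf_isGeneric.preimage continuous_curry_pi,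
    Measure.dense_of_ae ae_isGeneric_curry, ae_isGeneric_curry,
    fun _ hu _ hμ0 uS => hu.wHatF_eq_vHatF (curry uS) hμ0⟩
end
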